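/- arXiv:2007.06148 — 4 statements merged into one kernel-verified Lean document; each statement's English description precedes it below -/
import Mathlib

section
/- Let z* be a local optimal solution of the MPSC, let L_f > 0 be a Lipschitz constant of f on a neighborhood of z*, and suppose that MPSC directional quasi-normality holds at z* (or, alternatively, that MPSC piecewise CRSC holds at z*). Then there exists α > 0 (an MPSC local error bound constant at z*) such that z* is a local optimal solution of the penalized problem: minimize f(z) + L_f α [Σ_{i=1}^p max{0, g_i(z)} + Σ_{j=1}^q |h_j(z)| + Σ_{i=1}^m min{|G_i(z)|, |H_i(z)|}] over z ∈ ℝⁿ. -/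
open scoped Classical InnerProductSpace
open Filter Topology

noncomputable section

/-- Euclidean space `ℝⁿ`. -/
abbrev Euc (n : ℕ) : Type := EuclideanSpace ℝ (Fin n)

/-- Data of a mathematical program with switching constraints (MPSC):
`min f(z)` s.t. `g(z) ≤ 0`, `h(z) = 0`, `Gᵢ(z)Hᵢ(z) = 0 (i = 1,…,m)`,
with all defining functions continuously differentiable (gradients `f'`, `g'`, … are
genuine gradient maps, and they are continuous). -/
structure MPSC (n p q m : ℕ) where
  f : Euc n → ℝ
  g : Fin p → Euc n → ℝ
  h : Fin q → Euc n → ℝ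
  G : Fin m → Euc n → ℝ
  H : Fin m → Euc n → ℝ
  f' : Euc n → Euc n
  g' : Fin p → Euc n → Euc n
  h' : Fin q → Euc n → Euc n
  G' : Fin m → Euc n → Euc n
  H' : Fin m → Euc n → Euc n
  grad_f : ∀ z, HasGradientAt f (f' z) z
  grad_g : ∀ i z, HasGradientAt (g i) (g' i z) z
  grad_h : ∀ j z, HasGradientAt (h j) (h' j z) z
  grad_G : ∀ i z, HasGradientAt (G i) (G' i z) z
  grad_H : ∀ i z, HasGradientAt (H i) (H' i z) z
  cont_f' : Continuous f'
  cont_g' : ∀ i, Continuous (g' i)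
  cont_h' : ∀ j, Continuous (h' j)
  cont_G' : ∀ i, Continuous (G' i)
  cont_H' : ∀ i, Continuous (H' i)

namespace MPSC

variable {n p q m : ℕ} (P : MPSC n p q m)

/-- The feasible region `F` of the MPSC. -/
def Feas : Set (Euc n) :=
  {z | (∀ i, P.g i z ≤ 0) ∧ (∀ j, P.h j z = 0) ∧ ∀ i, P.G i z * P.H i z = 0}

/-- Active inequality constraints `I_g*`. -/
def Ig (zs : Euc n) : Set (Fin p) := {i | P.g i zs = 0}

/-- `I_G* = {i : Gᵢ(z*) = 0, Hᵢ(z*) ≠ 0}`. -/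
def IGs (zs : Euc n) : Set (Fin m) := {i | P.G i zs = 0 ∧ P.H i zs ≠ 0}

/-- `I_H* = {i : Gᵢ(z*) ≠ 0, Hᵢ(z*) = 0}`. -/
def IHs (zs : Euc n) : Set (Fin m) := {i | P.G i zs ≠ 0 ∧ P.H i zs = 0}

/-- `I_GH* = {i : Gᵢ(z*) = Hᵢ(z*) = 0}`. -/
def IGH (zs : Euc n) : Set (Fin m) := {i | P.G i zs = 0 ∧ P.H i zs = 0}

/-- `I_g*(d)`. -/
def Igd (zs d : Euc n) : Set (Fin p) := {i | P.g i zs = 0 ∧ ⟪P.g' i zs, d⟫_ℝ = 0}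

/-- `I_G*(d)`. -/
def IGd (zs d : Euc n) : Set (Fin m) :=
  {i | i ∈ P.IGH zs ∧ ⟪P.G' i zs, d⟫_ℝ = 0 ∧ ⟪P.H' i zs, d⟫_ℝ ≠ 0}

/-- `I_H*(d)`. -/
def IHd (zs d : Euc n) : Set (Fin m) :=
  {i | i ∈ P.IGH zs ∧ ⟪P.G' i zs, d⟫_ℝ ≠ 0 ∧ ⟪P.H' i zs, d⟫_ℝ = 0}

/-- `I_GH*(d)`. -/
def IGHd (zs d : Euc n) : Set (Fin m) :=
  {i | i ∈ P.IGH zs ∧ ⟪P.G' i zs, d⟫_ℝ = 0 ∧ ⟪P.H' i zs, d⟫_ℝ = 0}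

/-- The linearization cone `L(z*)` of the MPSC at `z*`. -/
def LinCone (zs : Euc n) : Set (Euc n) :=
  {d | (∀ i ∈ P.Ig zs, ⟪P.g' i zs, d⟫_ℝ ≤ 0) ∧ (∀ j, ⟪P.h' j zs, d⟫_ℝ = 0) ∧
       (∀ i ∈ P.IGs zs, ⟪P.G' i zs, d⟫_ℝ = 0) ∧ (∀ i ∈ P.IHs zs, ⟪P.H' i zs, d⟫_ℝ = 0) ∧
       (∀ i ∈ P.IGH zs, ⟪P.G' i zs, d⟫_ℝ * ⟪P.H' i zs, d⟫_ℝ = 0)}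

/-- The critical cone `C(z*)`. -/
def Crit (zs : Euc n) : Set (Euc n) := {d ∈ P.LinCone zs | ⟪P.f' zs, d⟫_ℝ ≤ 0}

/-- `(λ^g, λ^h, λ^G, λ^H)` is an M-multiplier in direction `d` at `z*`. -/
def IsMMultDir (zs d : Euc n) (lg : Fin p → ℝ) (lh : Fin q → ℝ) (lG lH : Fin m → ℝ) : Prop :=
  ((0 : Euc n) = P.f' zs
      + (∑ i ∈ Finset.univ.filter (fun i => i ∈ P.Igd zs d), lg i • P.g' i zs)
      + (∑ j, lh j • P.h' j zs) + (∑ i, (lG i • P.G' i zs + lH i • P.H' i zs))) ∧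
  (∀ i ∈ P.Igd zs d, 0 ≤ lg i) ∧ (∀ i ∉ P.Igd zs d, lg i = 0) ∧
  (∀ i, i ∈ P.IHs zs ∪ P.IHd zs d → lG i = 0) ∧
  (∀ i, i ∈ P.IGs zs ∪ P.IGd zs d → lH i = 0) ∧
  ∀ i ∈ P.IGHd zs d, lG i * lH i = 0

/-- `z*` is M-stationary in direction `d`. -/
def MStatDir (zs d : Euc n) : Prop :=
  ∃ (lg : Fin p → ℝ) (lh : Fin q → ℝ) (lG lH : Fin m → ℝ), P.IsMMultDir zs d lg lh lG lH

/-- `z*` is S-stationary in direction `d`. -/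
def SStatDir (zs d : Euc n) : Prop :=
  ∃ (lg : Fin p → ℝ) (lh : Fin q → ℝ) (lG lH : Fin m → ℝ),
    P.IsMMultDir zs d lg lh lG lH ∧ ∀ i ∈ P.IGHd zs d, lG i = 0 ∧ lH i = 0

/-- MPSC-LICQ in direction `d` at `z*`. -/
def LICQd (zs d : Euc n) : Prop :=
  LinearIndependent ℝ
    (Sum.elim (fun i : {i // i ∈ P.Igd zs d} => P.g' i.1 zs)
      (Sum.elim (fun j : Fin q => P.h' j zs)
        (Sum.elim (fun i : {i // i ∈ P.IGs zs ∪ P.IGd zs d ∪ P.IGHd zs d} => P.G' i.1 zs)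
          (fun i : {i // i ∈ P.IHs zs ∪ P.IHd zs d ∪ P.IGHd zs d} => P.H' i.1 zs))))

/-- MPSC-LICQ at `z*`. -/
def LICQ (zs : Euc n) : Prop :=
  LinearIndependent ℝ
    (Sum.elim (fun i : {i // i ∈ P.Ig zs} => P.g' i.1 zs)
      (Sum.elim (fun j : Fin q => P.h' j zs)
        (Sum.elim (fun i : {i // i ∈ P.IGs zs ∪ P.IGH zs} => P.G' i.1 zs)
          (fun i : {i // i ∈ P.IHs zs ∪ P.IGH zs} => P.H' i.1 zs))))

/-- MPSC quasi-normality at `z*` in direction `d`. -/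
def QuasiNormalDir (zs d : Euc n) : Prop :=
  ∀ (lg : Fin p → ℝ) (lh : Fin q → ℝ) (lG lH : Fin m → ℝ),
    ((0 : Euc n) = (∑ i, lg i • P.g' i zs) + (∑ j, lh j • P.h' j zs)
        + (∑ i, (lG i • P.G' i zs + lH i • P.H' i zs))) →
    ((∀ i ∈ P.Igd zs d, 0 ≤ lg i) ∧ (∀ i ∉ P.Igd zs d, lg i = 0) ∧
      (∀ i, i ∈ P.IGs zs ∪ P.IGd zs d → lH i = 0) ∧
      (∀ i, i ∈ P.IHs zs ∪ P.IHd zs d → lG i = 0) ∧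
      ∀ i ∈ P.IGHd zs d, lG i * lH i = 0) →
    (∃ (dk : ℕ → Euc n) (t : ℕ → ℝ),
      Tendsto dk atTop (𝓝 d) ∧ (∀ k, 0 < t k) ∧ Tendsto t atTop (𝓝 0) ∧
      ∀ k, (∀ i, lg i ≠ 0 → 0 < lg i * P.g i (zs + t k • dk k)) ∧
        (∀ j, lh j ≠ 0 → 0 < lh j * P.h j (zs + t k • dk k)) ∧
        (∀ i, lG i ≠ 0 → 0 < lG i * P.G i (zs + t k • dk k)) ∧
        (∀ i, lH i ≠ 0 → 0 < lH i * P.H i (zs + t k • dk k))) →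
    lg = 0 ∧ lh = 0 ∧ lG = 0 ∧ lH = 0

/-- MPSC directional quasi-normality at `z*`: quasi-normality in every direction of
the linearization cone. -/
def DirQuasiNormal (zs : Euc n) : Prop := ∀ d ∈ P.LinCone zs, P.QuasiNormalDir zs d

/-- `(λ^g, λ^h, λ^G, λ^H)` is an S-multiplier at `z*` (S-stationarity conditions). -/
def IsSMult (zs : Euc n) (lg : Fin p → ℝ) (lh : Fin q → ℝ) (lG lH : Fin m → ℝ) : Prop :=
  ((0 : Euc n) = P.f' zs
      + (∑ i ∈ Finset.univ.filter (fun i => i ∈ P.Ig zs), lg i • P.g' i zs)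
      + (∑ j, lh j • P.h' j zs) + (∑ i, (lG i • P.G' i zs + lH i • P.H' i zs))) ∧
  (∀ i ∈ P.Ig zs, 0 ≤ lg i) ∧ (∀ i ∈ P.IHs zs, lG i = 0) ∧ (∀ i ∈ P.IGs zs, lH i = 0) ∧
  ∀ i ∈ P.IGH zs, lG i = 0 ∧ lH i = 0

/-- `(λ^g, λ^h, λ^G, λ^H)` is an M-multiplier at `z*` (M-stationarity conditions). -/
def IsMMult (zs : Euc n) (lg : Fin p → ℝ) (lh : Fin q → ℝ) (lG lH : Fin m → ℝ) : Prop :=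
  ((0 : Euc n) = P.f' zs
      + (∑ i ∈ Finset.univ.filter (fun i => i ∈ P.Ig zs), lg i • P.g' i zs)
      + (∑ j, lh j • P.h' j zs) + (∑ i, (lG i • P.G' i zs + lH i • P.H' i zs))) ∧
  (∀ i ∈ P.Ig zs, 0 ≤ lg i) ∧ (∀ i ∈ P.IHs zs, lG i = 0) ∧ (∀ i ∈ P.IGs zs, lH i = 0) ∧
  ∀ i ∈ P.IGH zs, lG i * lH i = 0

/-- The rank `r(z*; d)` of the relevant family of gradients. -/
def rankd (zs d : Euc n) : ℕ :=
  Set.finrank ℝ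
    ((fun i => P.g' i zs) '' P.Igd zs d ∪ Set.range (fun j => P.h' j zs) ∪
      (fun i => P.G' i zs) '' (P.IGs zs ∪ P.IGd zs d ∪ P.IGHd zs d) ∪
      (fun i => P.H' i zs) '' (P.IHs zs ∪ P.IHd zs d ∪ P.IGHd zs d))

/-- `(J_g, J_G, J_H)` is an MPSC working set in direction `d`. -/
def IsWorkingSet (zs d : Euc n) (Jg : Finset (Fin p)) (JG JH : Finset (Fin m)) : Prop :=
  (∀ i ∈ Jg, i ∈ P.Igd zs d) ∧
  (∀ i ∈ JG, i ∈ P.IGs zs ∪ P.IGd zs d ∪ P.IGHd zs d) ∧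
  (∀ i ∈ JH, i ∈ P.IHs zs ∪ P.IHd zs d ∪ P.IGHd zs d) ∧
  JG ∪ JH = Finset.univ ∧
  Jg.card + q + JG.card + JH.card = P.rankd zs d ∧
  LinearIndependent ℝ
    (Sum.elim (fun i : {i // i ∈ Jg} => P.g' i.1 zs)
      (Sum.elim (fun j : Fin q => P.h' j zs)
        (Sum.elim (fun i : {i // i ∈ JG} => P.G' i.1 zs)
          (fun i : {i // i ∈ JH} => P.H' i.1 zs))))

/-- `z*` is strongly M-stationary in direction `d`. -/
def StronglyMStatDir (zs d : Euc n) : Prop :=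
  ∃ (Jg : Finset (Fin p)) (JG JH : Finset (Fin m)) (lg : Fin p → ℝ) (lh : Fin q → ℝ)
    (lG lH : Fin m → ℝ),
    P.IsWorkingSet zs d Jg JG JH ∧ P.IsMMultDir zs d lg lh lG lH ∧
    (∀ i ∉ Jg, lg i = 0) ∧ (∀ i ∉ JG, lG i = 0) ∧ (∀ i ∉ JH, lH i = 0) ∧
    ∀ i ∈ JG ∩ JH, lG i = 0 ∧ lH i = 0

/-- The MPSC constraint-violation residual. -/
def residual (z : Euc n) : ℝ :=
  (∑ i, max (P.g i z) 0) + (∑ j, |P.h j z|) + ∑ i, min |P.G i z| |P.H i z|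

/-- The MPSC local error bound property around `z*`. -/
def ErrorBound (zs : Euc n) : Prop :=
  ∃ V ∈ 𝓝 zs, ∃ α > (0 : ℝ), ∀ z ∈ V, Metric.infDist z P.Feas ≤ α * P.residual z

/-- Equality-constraint gradients (at `z`) of the branch problem `NLP(β₁, β₂)`. -/
def EqGrads (zs : Euc n) (b1 b2 : Set (Fin m)) (z : Euc n) : Set (Euc n) :=
  Set.range (fun j => P.h' j z) ∪ (fun i => P.G' i z) '' (P.IGs zs ∪ b1) ∪
    (fun i => P.H' i z) '' (P.IHs zs ∪ b2)

/-- The index set `I⁻` of the branch problem `NLP(β₁, β₂)` at `z*`. -/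
def Iminus (zs : Euc n) (b1 b2 : Set (Fin m)) : Set (Fin p) :=
  {l | l ∈ P.Ig zs ∧
    ∃ (lh : Fin q → ℝ) (lG lH : Fin m → ℝ) (mu : Fin p → ℝ),
      (∀ i, i ∉ P.IGs zs ∪ b1 → lG i = 0) ∧ (∀ i, i ∉ P.IHs zs ∪ b2 → lH i = 0) ∧
      (∀ i, 0 ≤ mu i) ∧ (∀ i, ¬(i ∈ P.Ig zs ∧ i ≠ l) → mu i = 0) ∧
      -(P.g' l zs) = (∑ j, lh j • P.h' j zs)
        + (∑ i, (lG i • P.G' i zs + lH i • P.H' i zs)) + (∑ i, mu i • P.g' i zs)}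

/-- CRSC holds at `z*` for the branch problem `NLP(β₁, β₂)`. -/
def CRSCpiece (zs : Euc n) (b1 b2 : Set (Fin m)) : Prop :=
  ∃ U ∈ 𝓝 zs, ∀ z ∈ U,
    Set.finrank ℝ ((fun i => P.g' i z) '' P.Iminus zs b1 b2 ∪ P.EqGrads zs b1 b2 z) =
      Set.finrank ℝ ((fun i => P.g' i zs) '' P.Iminus zs b1 b2 ∪ P.EqGrads zs b1 b2 zs)

/-- MPSC piecewise CRSC: CRSC holds for every branch problem `NLP(β₁, β₂)`. -/
def PiecewiseCRSC (zs : Euc n) : Prop :=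
  ∀ b1 b2 : Set (Fin m), b1 ∪ b2 = P.IGH zs → b1 ∩ b2 = ∅ → P.CRSCpiece zs b1 b2

/-- The set-valued map `K` (index sets frozen at `z*`, gradients at `z`). -/
def Kmap (zs z : Euc n) : Set (Euc n) :=
  {y | ∃ (lg : Fin p → ℝ) (lh : Fin q → ℝ) (lG lH : Fin m → ℝ),
      (∀ i, 0 ≤ lg i) ∧ (∀ i, i ∉ P.Ig zs → lg i = 0) ∧
      (∀ i ∈ P.IGs zs, lH i = 0) ∧ (∀ i ∈ P.IHs zs, lG i = 0) ∧
      (∀ i ∈ P.IGH zs, lG i * lH i = 0) ∧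
      y = (∑ i, lg i • P.g' i z) + (∑ j, lh j • P.h' j z)
          + (∑ i, (lG i • P.G' i z + lH i • P.H' i z))}

/-- `z*` is AM-regular. -/
def AMRegular (zs : Euc n) : Prop :=
  ∀ y : Euc n,
    (∃ zk yk : ℕ → Euc n, Tendsto zk atTop (𝓝 zs) ∧ Tendsto yk atTop (𝓝 y) ∧
      ∀ k, yk k ∈ P.Kmap zs (zk k)) → y ∈ P.Kmap zs zs

/-- The regular (Fréchet) normal cone to `A` at `x`. -/
def frechetNormalCone (A : Set (Euc n)) (x : Euc n) : Set (Euc n) :=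
  {ζ | ∀ ε > (0 : ℝ), ∃ δ > (0 : ℝ), ∀ y ∈ A, ‖y - x‖ < δ → ⟪ζ, y - x⟫_ℝ ≤ ε * ‖y - x‖}

/-- The generalized Guignard constraint qualification at `z*`. -/
def GGCQ (zs : Euc n) : Prop :=
  frechetNormalCone P.Feas zs = {ζ | ∀ d ∈ P.LinCone zs, ⟪ζ, d⟫_ℝ ≤ 0}

/-- Membership in the multiplier set `R_SC`. -/
def InRSC (zs : Euc n) (lg : Fin p → ℝ) (lh : Fin q → ℝ) (lG lH : Fin m → ℝ) : Prop :=
  (∀ i, i ∉ P.Ig zs → lg i = 0) ∧ (∀ i ∈ P.IHs zs, lG i = 0) ∧ ∀ i ∈ P.IGs zs, lH i = 0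

/-- Membership in the multiplier set `N_SC`. -/
def InNSC (zs : Euc n) (mg : Fin p → ℝ) (mh : Fin q → ℝ) (mG mH : Fin m → ℝ) : Prop :=
  P.InRSC zs mg mh mG mH ∧
  (0 : Euc n) = (∑ i, mg i • P.g' i zs) + (∑ j, mh j • P.h' j zs)
      + (∑ i, (mG i • P.G' i zs + mH i • P.H' i zs))

/-- `z*` is Q-stationary with respect to the bipartition `(β₁, β₂)` of `I_GH*`. -/
def QStat (zs : Euc n) (b1 b2 : Set (Fin m)) : Prop :=
  ∃ (lg mg : Fin p → ℝ) (lh mh : Fin q → ℝ) (lG lH mG mH : Fin m → ℝ),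
    P.InRSC zs lg lh lG lH ∧
    ((0 : Euc n) = P.f' zs + (∑ i, lg i • P.g' i zs) + (∑ j, lh j • P.h' j zs)
        + (∑ i, (lG i • P.G' i zs + lH i • P.H' i zs))) ∧
    P.InNSC zs mg mh mG mH ∧
    (∀ i ∈ P.Ig zs, max (mg i) 0 ≤ lg i) ∧
    (∀ i ∈ b1, lH i = 0 ∧ lG i = mG i) ∧
    ∀ i ∈ b2, lG i = 0 ∧ lH i = mH i

end MPSC

theorem aux_maxsq (s : ℝ) : HasDerivAt (fun t : ℝ => max t 0 ^ 2) (2 * max s 0) s := by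
  rcases lt_trichotomy s 0 with h | h | h
  · have : (fun t : ℝ => max t 0 ^ 2) =ᶠ[𝓝 s] fun _ => 0 := by
      filter_upwards [gt_mem_nhds h] with t ht
      simp [max_eq_right ht.le]
    rw [max_eq_right h.le, mul_zero]
    exact (hasDerivAt_const s (0:ℝ)).congr_of_eventuallyEq this
  · subst h
    simp only [max_self, mul_zero]
    rw [hasDerivAt_iff_isLittleO]
    simp only [max_self, sub_zero, smul_zero]
    rw [Asymptotics.isLittleO_iff]
    intro c hc
    filter_upwards [Metric.ball_mem_nhds (0:ℝ) hc] with t ht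
    rw [Metric.mem_ball, Real.dist_eq, sub_zero] at ht
    have h1 : max t 0 ≤ |t| := max_le (le_abs_self t) (abs_nonneg t)
    have h2 : 0 ≤ max t 0 := le_max_right _ _
    simp only [Real.norm_eq_abs]
    rw [abs_of_nonneg (by norm_num)]
    have h3 := abs_nonneg t
    norm_num
    nlinarith
  · have : (fun t : ℝ => max t 0 ^ 2) =ᶠ[𝓝 s] fun t => t ^ 2 := by
      filter_upwards [lt_mem_nhds h] with t ht
      simp [max_eq_left ht.le]
    rw [max_eq_left h.le]
    have := (hasDerivAt_pow 2 s).congr_of_eventuallyEq this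
    simpa using this

theorem aux_gradbound {n : ℕ} {φ : Euc n → ℝ} {v y : Euc n} {ε : ℝ} (hε : 0 ≤ ε)
    (h : HasGradientAt φ v y) (hm : ∀ᶠ u in 𝓝 y, φ y - ε * ‖u - y‖ ≤ φ u) : ‖v‖ ≤ ε := by
  by_contra! hlt
  have hv : 0 < ‖v‖ := lt_of_le_of_lt hε hlt
  have h1 : HasDerivAt (fun t : ℝ => y + t • (-v)) (-v) 0 := by
    simpa using ((hasDerivAt_id (0:ℝ)).smul_const (-v)).const_add y
  have h2 : HasDerivAt (fun t : ℝ => φ (y + t • (-v))) (-‖v‖^2) 0 := by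
    have h3 : HasFDerivAt φ (InnerProductSpace.toDual ℝ _ v) (y + (0:ℝ) • (-v)) := by
      simpa using h.hasFDerivAt
    have := h3.comp_hasDerivAt (0:ℝ) h1
    simpa [Function.comp_def] using this
  have h4 : Tendsto (fun t : ℝ => y + t • (-v)) (𝓝 0) (𝓝 y) := by
    simpa using h1.continuousAt.tendsto
  have h5 := h2.tendsto_slope_zero_right
  have h6 : ∀ᶠ t in 𝓝[>] (0:ℝ), -(ε * ‖v‖) ≤ t⁻¹ • (φ (y + (0 + t) • (-v)) - φ (y + (0:ℝ) • (-v))) := by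
    filter_upwards [(h4.eventually hm).filter_mono nhdsWithin_le_nhds, self_mem_nhdsWithin] with t ht ht0
    have ht0 : 0 < t := ht0
    simp only [zero_add, zero_smul, add_zero, smul_eq_mul]
    rw [inv_mul_eq_div, le_div_iff₀ ht0]
    simp only [add_sub_cancel_left, norm_smul, norm_neg, Real.norm_eq_abs, abs_of_pos ht0] at ht
    linarith
  have h7 := ge_of_tendsto h5 h6
  nlinarith

theorem aux_EB {n : ℕ} {ι κ : Type*} [Fintype ι] [Fintype κ]
    (g : ι → Euc n → ℝ) (g' : ι → Euc n → Euc n) (e : κ → Euc n → ℝ) (e' : κ → Euc n → Euc n)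
    (hg : ∀ i z, HasGradientAt (g i) (g' i z) z) (he : ∀ i z, HasGradientAt (e i) (e' i z) z)
    (cg : ∀ i, Continuous (g' i)) (ce : ∀ i, Continuous (e' i))
    (zs : Euc n) (hgz : ∀ i, g i zs ≤ 0) (hez : ∀ j, e j zs = 0)
    (hQ : ∀ (l : ι → ℝ) (μ : κ → ℝ), (∀ i, 0 ≤ l i) →
      (∑ i, l i • g' i zs) + (∑ j, μ j • e' j zs) = 0 →
      (∃ y : ℕ → Euc n, Tendsto y atTop (𝓝 zs) ∧ ∀ k, (∀ i, l i ≠ 0 → 0 < g i (y k)) ∧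
        ∀ j, μ j ≠ 0 → 0 < μ j * e j (y k)) → l = 0 ∧ μ = 0) :
    ∃ α > (0:ℝ), ∀ᶠ x in 𝓝 zs, ∃ y, (∀ i, g i y ≤ 0) ∧ (∀ j, e j y = 0) ∧
      ‖x - y‖ ≤ α * ((∑ i, max (g i x) 0) + ∑ j, |e j x|) := by
  have gc : ∀ i, Continuous (g i) := fun i =>
    continuous_iff_continuousAt.2 fun z => (hg i z).continuousAt
  have ec : ∀ i, Continuous (e i) := fun i =>
    continuous_iff_continuousAt.2 fun z => (he i z).continuousAt
  by_contra! hcon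
  set s : Euc n → ℝ := fun x => (∑ i, max (g i x) 0 ^ 2) + ∑ j, e j x ^ 2 with hs
  have s0 : ∀ x, 0 ≤ s x := fun x => by positivity
  set r : Euc n → ℝ := fun x => √(s x) with hr
  set R : Euc n → ℝ := fun x => (∑ i, max (g i x) 0) + ∑ j, |e j x| with hR
  have R0 : ∀ x, 0 ≤ R x := fun x => by positivity
  have hrR : ∀ x, r x ≤ R x := by
    intro x
    apply Real.sqrt_le_iff.2 ⟨R0 x, ?_⟩
    have h1 : ∑ i, max (g i x) 0 ^ 2 ≤ (∑ i, max (g i x) 0)^2 :=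
      Finset.sum_sq_le_sq_sum_of_nonneg (fun i _ => le_max_right _ _)
    have h2 : ∑ j, |e j x| ^ 2 ≤ (∑ j, |e j x|)^2 :=
      Finset.sum_sq_le_sq_sum_of_nonneg (fun i _ => abs_nonneg _)
    simp only [sq_abs] at h2
    have h3 : 0 ≤ ∑ i, max (g i x) 0 := by positivity
    have h4 : 0 ≤ ∑ j, |e j x| := by positivity
    simp only [hs, hR]
    nlinarith
  have sc : Continuous s := by
    simp only [hs]; fun_prop
  have rc : Continuous r := Real.continuous_sqrt.comp sc
  -- gradient of r
  have hgr : ∀ x, 0 < r x → HasGradientAt r ((∑ i, (max (g i x) 0 / r x) • g' i x)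
      + ∑ j, (e j x / r x) • e' j x) x := by
    intro x hx
    have hsx : s x ≠ 0 := by
      intro h; simp [hr, h] at hx
    rw [hasGradientAt_iff_hasFDerivAt]
    have h1 : HasFDerivAt s ((∑ i, (2 * max (g i x) 0) • InnerProductSpace.toDual ℝ (Euc n) (g' i x))
        + ∑ j, (2 * e j x) • InnerProductSpace.toDual ℝ (Euc n) (e' j x)) x := by
      refine HasFDerivAt.add ?_ ?_
      · refine HasFDerivAt.fun_sum fun i _ => ?_
        exact (aux_maxsq (g i x)).comp_hasFDerivAt x (hg i x).hasFDerivAt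
      · refine HasFDerivAt.fun_sum fun j _ => ?_
        have := (hasDerivAt_pow 2 (e j x)).comp_hasFDerivAt x (he j x).hasFDerivAt
        simpa [Function.comp_def] using this
    have h2 := h1.sqrt hsx
    refine h2.congr_fderiv ?_
    have : √(s x) = r x := rfl
    rw [this]
    symm
    simp only [map_add, map_sum, map_smul, smul_add, Finset.smul_sum, smul_smul]
    congr 1
    · refine Finset.sum_congr rfl fun i _ => ?_
      congr 1; field_simp
    · refine Finset.sum_congr rfl fun i _ => ?_
      congr 1; field_simp
  have key : ∀ k : ℕ, ∃ y : Euc n, ‖y - zs‖ ≤ 2 * (1 / ((k:ℝ)+1)) ∧ 0 < r y ∧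
      ‖(∑ i, (max (g i y) 0 / r y) • g' i y) + ∑ j, (e j y / r y) • e' j y‖ ≤ 1 / ((k:ℝ)+1) := by
    intro k
    have hk : (0:ℝ) < (k:ℝ)+1 := by positivity
    have hk1 : 1 / ((k:ℝ)+1) ≤ 1 := by rw [div_le_one hk]; linarith [Nat.cast_nonneg (α := ℝ) k]
    have hk0 : 0 < 1 / ((k:ℝ)+1) := by positivity
    obtain ⟨x, hx1, hx2⟩ := ((hcon ((k:ℝ)+1) hk).and_eventually
      (Metric.ball_mem_nhds zs hk0)).exists
    rw [dist_eq_norm] at hx2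
    have hxz := hx1 zs hgz hez
    obtain ⟨y, hyb, hy⟩ := (isCompact_closedBall zs (3:ℝ)).exists_isMinOn
      ⟨zs, Metric.mem_closedBall_self (by norm_num)⟩
      (f := fun u => r u + 1 / ((k:ℝ)+1) * ‖u - x‖) (by fun_prop)
    have hyx : ‖y - x‖ ≤ ((k:ℝ)+1) * r x := by
      have := hy (show x ∈ Metric.closedBall zs 3 by
        rw [Metric.mem_closedBall, dist_eq_norm]; linarith)
      simp only [Set.mem_ofPred_eq, sub_self, norm_zero, mul_zero, add_zero] at this
      have h0 : 0 ≤ r y := Real.sqrt_nonneg _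
      have h1 : 1 / ((k:ℝ)+1) * ‖y - x‖ ≤ r x := by linarith
      rw [div_mul_eq_mul_div, one_mul, div_le_iff₀ hk] at h1
      linarith
    have hle : ((k:ℝ)+1) * r x ≤ ((k:ℝ)+1) * R x := mul_le_mul_of_nonneg_left (hrR x) hk.le
    have hyz : ‖y - zs‖ < 2 * (1 / ((k:ℝ)+1)) := by
      have : ‖y - zs‖ ≤ ‖y - x‖ + ‖x - zs‖ := norm_sub_le_norm_sub_add_norm_sub y x zs
      linarith
    have hry : 0 < r y := by
      by_contra! hn
      have hsy : s y = 0 := by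
        have := Real.sqrt_eq_zero'.1 (le_antisymm hn (Real.sqrt_nonneg _))
        exact le_antisymm this (s0 y)
      have h1 : ∑ i, max (g i y) 0 ^ 2 = 0 ∧ ∑ j, e j y ^ 2 = 0 := by
        have a1 : 0 ≤ ∑ i, max (g i y) 0 ^ 2 := by positivity
        have a2 : 0 ≤ ∑ j, e j y ^ 2 := by positivity
        simp only [hs] at hsy
        constructor <;> linarith
      have h2 := (Finset.sum_eq_zero_iff_of_nonneg (fun i _ => by positivity)).1 h1.1
      have h3 := (Finset.sum_eq_zero_iff_of_nonneg (fun i _ => by positivity)).1 h1.2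
      have := hx1 y (fun i => by simpa using h2 i (Finset.mem_univ i))
        (fun j => by simpa using h3 j (Finset.mem_univ j))
      rw [norm_sub_rev] at hyx
      linarith
    refine ⟨y, hyz.le, hry, aux_gradbound hk0.le (hgr y hry) ?_⟩
    have hyb' : y ∈ Metric.ball zs 3 := by
      rw [Metric.mem_ball, dist_eq_norm]; linarith
    filter_upwards [Metric.isOpen_ball.mem_nhds hyb'] with u hu
    have := hy (Metric.ball_subset_closedBall hu)
    simp only [Set.mem_ofPred_eq] at this
    have h1 : ‖u - x‖ ≤ ‖u - y‖ + ‖y - x‖ := norm_sub_le_norm_sub_add_norm_sub u y x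
    have h2 := mul_le_mul_of_nonneg_left h1 hk0.le
    linarith
  choose y hy1 hy2 hy3 using key
  have hyt : Tendsto y atTop (𝓝 zs) := by
    rw [tendsto_iff_norm_sub_tendsto_zero]
    refine squeeze_zero (fun _ => norm_nonneg _) hy1 ?_
    simpa using (tendsto_one_div_add_atTop_nhds_zero_nat (𝕜 := ℝ)).const_mul 2
  set w : ℕ → (ι → ℝ) × (κ → ℝ) := fun k =>
    (fun i => max (g i (y k)) 0 / r (y k), fun j => e j (y k) / r (y k)) with hw
  have hsum : ∀ k, (∑ i, (w k).1 i ^ 2) + ∑ j, (w k).2 j ^ 2 = 1 := by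
    intro k
    simp only [hw, div_pow, ← Finset.sum_div, ← add_div]
    have : r (y k) ^ 2 = s (y k) := Real.sq_sqrt (s0 _)
    rw [this]
    refine div_self ?_
    have h := (pow_pos (hy2 k) 2).ne'
    rw [this] at h
    exact h
  have hwb : ∀ k, w k ∈ Metric.closedBall (0 : (ι → ℝ) × (κ → ℝ)) 1 := by
    intro k
    have hk := hsum k
    rw [mem_closedBall_zero_iff, Prod.norm_def, max_le_iff, pi_norm_le_iff_of_nonneg zero_le_one,
      pi_norm_le_iff_of_nonneg zero_le_one]
    constructor
    · intro i
      have h1 := Finset.single_le_sum (f := fun i => (w k).1 i ^ 2) (fun i _ => sq_nonneg _) (Finset.mem_univ i)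
      have h2 : 0 ≤ ∑ j, (w k).2 j ^ 2 := by positivity
      rw [Real.norm_eq_abs, ← sq_le_one_iff_abs_le_one]; linarith
    · intro i
      have h1 := Finset.single_le_sum (f := fun i => (w k).2 i ^ 2) (fun i _ => sq_nonneg _) (Finset.mem_univ i)
      have h2 : 0 ≤ ∑ j, (w k).1 j ^ 2 := by positivity
      rw [Real.norm_eq_abs, ← sq_le_one_iff_abs_le_one]; linarith
  obtain ⟨⟨l, μ⟩, -, σ, hσ, hlim⟩ := (isCompact_closedBall _ _).tendsto_subseq hwb
  have hyσ : Tendsto (y ∘ σ) atTop (𝓝 zs) := hyt.comp hσ.tendsto_atTop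
  have hl : ∀ i, Tendsto (fun k => (w (σ k)).1 i) atTop (𝓝 (l i)) := fun i =>
    ((continuous_apply i).comp continuous_fst).continuousAt.tendsto.comp hlim
  have hμ : ∀ j, Tendsto (fun k => (w (σ k)).2 j) atTop (𝓝 (μ j)) := fun j =>
    ((continuous_apply j).comp continuous_snd).continuousAt.tendsto.comp hlim
  have hone : (∑ i, l i ^ 2) + ∑ j, μ j ^ 2 = 1 := by
    have h1 : Tendsto (fun k => (∑ i, (w (σ k)).1 i ^ 2) + ∑ j, (w (σ k)).2 j ^ 2) atTop
        (𝓝 ((∑ i, l i ^ 2) + ∑ j, μ j ^ 2)) :=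
      (tendsto_finsetSum _ fun i _ => (hl i).pow 2).add
        (tendsto_finsetSum _ fun i _ => (hμ i).pow 2)
    simp only [hsum] at h1
    exact tendsto_nhds_unique h1 tendsto_const_nhds
  have hl0 : ∀ i, 0 ≤ l i := fun i => ge_of_tendsto' (hl i) fun k =>
    div_nonneg (le_max_right _ _) (hy2 _).le
  have hst : (∑ i, l i • g' i zs) + (∑ j, μ j • e' j zs) = 0 := by
    have h1 : Tendsto (fun k => (∑ i, (w (σ k)).1 i • g' i (y (σ k))) +
        ∑ j, (w (σ k)).2 j • e' j (y (σ k))) atTop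
        (𝓝 ((∑ i, l i • g' i zs) + (∑ j, μ j • e' j zs))) :=
      (tendsto_finsetSum _ fun i _ => (hl i).smul (((cg i).tendsto zs).comp hyσ)).add
        (tendsto_finsetSum _ fun i _ => (hμ i).smul (((ce i).tendsto zs).comp hyσ))
    refine tendsto_nhds_unique h1 ?_
    rw [tendsto_zero_iff_norm_tendsto_zero]
    refine squeeze_zero (fun _ => norm_nonneg _) (fun k => hy3 (σ k)) ?_
    exact (tendsto_one_div_add_atTop_nhds_zero_nat (𝕜 := ℝ)).comp hσ.tendsto_atTop
  have hev : ∀ᶠ k in atTop, (∀ i, l i ≠ 0 → 0 < g i (y (σ k))) ∧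
        ∀ j, μ j ≠ 0 → 0 < μ j * e j (y (σ k)) := by
    rw [eventually_and, eventually_all, eventually_all]
    constructor
    · intro i
      by_cases h : l i = 0
      · simp [h]
      have : 0 < l i := lt_of_le_of_ne (hl0 i) (Ne.symm h)
      filter_upwards [(hl i).eventually_const_lt this] with k hk _
      have h1 : 0 < max (g i (y (σ k))) 0 := by
        by_contra! h2
        exact absurd (div_nonpos_of_nonpos_of_nonneg h2 (hy2 (σ k)).le) (not_le.2 hk)
      simpa using h1
    · intro j
      by_cases h : μ j = 0
      · simp [h]
      have h3 : 0 < μ j * μ j := mul_self_pos.2 h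
      filter_upwards [((hμ j).const_mul (μ j)).eventually_const_lt h3] with k hk _
      simp only [hw, ← mul_div_assoc] at hk
      by_contra! h2
      exact absurd (div_nonpos_of_nonpos_of_nonneg h2 (hy2 (σ k)).le) (not_le.2 hk)
  obtain ⟨N, hN⟩ := eventually_atTop.1 hev
  have := hQ l μ hl0 hst ⟨fun k => y (σ (k + N)), ?_, fun k => hN (k + N) (Nat.le_add_left _ _)⟩
  · rw [this.1, this.2] at hone
    simp at hone
  · exact hyσ.comp (tendsto_add_atTop_nat N)

theorem aux_contDiff {n : ℕ} {φ : Euc n → ℝ} {φ' : Euc n → Euc n}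
    (h : ∀ z, HasGradientAt φ (φ' z) z) (c : Continuous φ') : ContDiff ℝ 1 φ :=
  contDiff_one_iff_hasFDerivAt.2 ⟨fun z => InnerProductSpace.toDual ℝ _ (φ' z),
    (InnerProductSpace.toDual ℝ (Euc n)).continuous.comp c, fun z => (h z).hasFDerivAt⟩

theorem aux_dual {n : ℕ} {κ : Type*} [Fintype κ] {v : κ → Euc n} (hv : LinearIndependent ℝ v) :
    ∃ a : κ → Euc n, ∀ b c, ⟪v b, a c⟫_ℝ = if b = c then 1 else 0 := by
  let S := Submodule.span ℝ (Set.range v)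
  let B := Module.Basis.span hv
  refine ⟨fun c => (InnerProductSpace.toDual ℝ (Euc n)).symm
    ((LinearMap.toContinuousLinearMap (B.coord c)).comp S.orthogonalProjectionOnto), fun b c => ?_⟩
  rw [real_inner_comm, InnerProductSpace.toDual_symm_apply]
  have h1 : v b = ((B b : S) : Euc n) := by
    simp [B, Module.Basis.span_apply]
  rw [h1]
  simp [Finsupp.single_apply]

theorem aux_CR {n : ℕ} {κ : Type*} [Fintype κ]
    (φ : κ → Euc n → ℝ) (φ' : κ → Euc n → Euc n) (ψ : Euc n → ℝ) (ψ' : Euc n → Euc n)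
    (hφ : ∀ i z, HasGradientAt (φ i) (φ' i z) z) (hψ : ∀ z, HasGradientAt ψ (ψ' z) z)
    (cφ : ∀ i, Continuous (φ' i)) (_ : Continuous ψ')
    (zs : Euc n) (hφz : ∀ i, φ i zs = 0) (hψz : ψ zs = 0) (hψ'z : ψ' zs = 0)
    (hli : LinearIndependent ℝ (fun i => φ' i zs))
    (hsp : ∀ᶠ z in 𝓝 zs, ψ' z ∈ Submodule.span ℝ (Set.range fun i => φ' i z))
    (ε : ℝ) (hε : 0 < ε) :
    ∀ᶠ x in 𝓝 zs, |ψ x| ≤ ε * ∑ i, |φ i x| := by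
  obtain ⟨a, ha⟩ := aux_dual hli
  set Θ : Euc n → Euc n := fun x => x + ∑ c, (φ c x - ⟪φ' c zs, x - zs⟫_ℝ) • a c with hΘ
  have cdφ : ∀ c, ContDiff ℝ 1 (φ c) := fun c => aux_contDiff (hφ c) (cφ c)
  have cdΘ : ContDiff ℝ 1 Θ := by
    refine contDiff_id.add (ContDiff.sum fun c _ => ContDiff.fun_smul ?_ contDiff_const)
    exact (cdφ c).sub (contDiff_const.inner ℝ (contDiff_id.sub contDiff_const))
  have Θz : Θ zs = zs := by simp [hΘ, hφz]
  have Θin : ∀ b x, ⟪φ' b zs, Θ x - zs⟫_ℝ = φ b x := by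
    intro b x
    simp only [hΘ, add_sub_right_comm, inner_add_right, inner_sum, inner_smul_right, ha]
    simp
  have dΘ : HasFDerivAt Θ ((ContinuousLinearEquiv.refl ℝ (Euc n) : Euc n ≃L[ℝ] Euc n) : Euc n →L[ℝ] Euc n) zs := by
    have h1 : HasFDerivAt Θ (ContinuousLinearMap.id ℝ (Euc n) +
        ∑ c, ((InnerProductSpace.toDual ℝ (Euc n) (φ' c zs)) - (InnerProductSpace.toDual ℝ (Euc n) (φ' c zs))).smulRight (a c)) zs := by
      refine (hasFDerivAt_id zs).add (HasFDerivAt.fun_sum fun c _ => HasFDerivAt.smul_const ?_ _)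
      refine (hφ c zs).hasFDerivAt.sub ?_
      have := ((InnerProductSpace.toDual ℝ (Euc n) (φ' c zs)).hasFDerivAt (x := zs)).sub_const ⟪φ' c zs, zs⟫_ℝ
      refine this.congr_of_eventuallyEq (Eventually.of_forall fun x => ?_)
      simp [inner_sub_right]
    refine h1.congr_fderiv ?_
    ext x
    simp
  have cdA : ContDiffAt ℝ 1 Θ zs := cdΘ.contDiffAt
  set η := cdA.localInverse dΘ one_ne_zero with hη
  have sΘ := cdA.hasStrictFDerivAt' dΘ one_ne_zero
  have hηs : η = HasStrictFDerivAt.localInverse Θ _ zs sΘ := rfl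
  have hR : ∀ᶠ y in 𝓝 zs, Θ (η y) = y := by
    have := sΘ.eventually_right_inverse
    rwa [Θz] at this
  have hL : ∀ᶠ x in 𝓝 zs, η (Θ x) = x := sΘ.eventually_left_inverse
  have cdη : ContDiffAt ℝ 1 η zs := by
    have := cdA.to_localInverse dΘ one_ne_zero
    rwa [Θz] at this
  have ηz : η zs = zs := by
    have := hL.self_of_nhds
    rwa [Θz] at this
  have hdη : ∀ᶠ y in 𝓝 zs, DifferentiableAt ℝ η y :=
    (cdη.eventually (by simp)).mono fun y h => h.differentiableAt (by simp)
  have tη : Tendsto η (𝓝 zs) (𝓝 zs) := by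
    have := cdη.continuousAt.tendsto
    rwa [ηz] at this
  have hspη := tη.eventually hsp
  -- derivative of ψ ∘ η at zs
  have dΨ : HasFDerivAt (ψ ∘ η) (0 : Euc n →L[ℝ] ℝ) zs := by
    have h1 : HasFDerivAt ψ (0 : Euc n →L[ℝ] ℝ) (η zs) := by
      have := (hψ zs).hasFDerivAt
      rw [hψ'z] at this
      rw [ηz]; simpa using this
    have := h1.comp zs hdη.self_of_nhds.hasFDerivAt
    simpa using this
  set M : ℝ := 1 + ∑ c, ‖a c‖ with hM
  have M0 : 0 < M := by positivity
  have hlo : ∀ᶠ y in 𝓝 zs, |ψ (η y)| ≤ ε / M * ‖y - zs‖ := by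
    have := dΨ.isLittleO.bound (div_pos hε M0)
    filter_upwards [this] with y hy
    simpa [ηz, hψz] using hy
  obtain ⟨δ, δ0, hδ⟩ := Metric.eventually_nhds_iff_ball.1 (hR.and (hdη.and hspη))
  have tΘ : Tendsto Θ (𝓝 zs) (𝓝 zs) := by
    have := cdΘ.continuous.tendsto zs
    rwa [Θz] at this
  have tY : Tendsto (fun x => zs + ∑ c, φ c x • a c) (𝓝 zs) (𝓝 zs) := by
    have h1 : Continuous (fun x => zs + ∑ c, φ c x • a c) :=
      continuous_const.add (continuous_finsetSum _ fun c _ => (cdφ c).continuous.smul continuous_const)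
    have := h1.tendsto zs
    simpa [hφz] using this
  filter_upwards [tΘ.eventually (Metric.ball_mem_nhds zs δ0), tY.eventually (Metric.ball_mem_nhds zs δ0),
    tY.eventually hlo, hL] with x h1 h2 h3 h4
  set y := Θ x
  set y0 := zs + ∑ c, φ c x • a c with hy0
  have hv : ∀ b, ⟪φ' b zs, y - y0⟫_ℝ = 0 := by
    intro b
    have e1 : y - y0 = (y - zs) - ∑ c, φ c x • a c := by rw [hy0]; abel
    rw [e1, inner_sub_right, Θin b x, inner_sum]
    simp [inner_smul_right, ha]
  have hconst : ψ (η y) = ψ (η y0) := by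
    have hseg : ∀ t ∈ Set.Icc (0:ℝ) 1, y0 + t • (y - y0) ∈ Metric.ball zs δ := by
      intro t ht
      exact (convex_ball zs δ).add_smul_sub_mem h2 h1 ht
    have hd : ∀ t ∈ Set.Icc (0:ℝ) 1, HasDerivAt (fun t : ℝ => ψ (η (y0 + t • (y - y0)))) 0 t := by
      intro t ht
      set u := y0 + t • (y - y0) with hu
      have hub := hseg t ht
      obtain ⟨-, du, su⟩ := hδ u hub
      have l1 : HasDerivAt (fun t : ℝ => y0 + t • (y - y0)) (y - y0) t := by
        simpa using ((hasDerivAt_id t).smul_const (y - y0)).const_add y0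
      have l2 : HasDerivAt (fun t : ℝ => η (y0 + t • (y - y0))) (fderiv ℝ η u (y - y0)) t :=
        du.hasFDerivAt.comp_hasDerivAt t l1
      have l3 : HasDerivAt (fun t : ℝ => ψ (η (y0 + t • (y - y0)))) ⟪ψ' (η u), fderiv ℝ η u (y - y0)⟫_ℝ t := by
        have := (hψ (η u)).hasFDerivAt.comp_hasDerivAt t l2
        simpa [Function.comp_def] using this
      have l4 : ∀ b, ⟪φ' b (η u), fderiv ℝ η u (y - y0)⟫_ℝ = 0 := by
        intro b
        have m1 : HasDerivAt (fun t : ℝ => φ b (η (y0 + t • (y - y0)))) ⟪φ' b (η u), fderiv ℝ η u (y - y0)⟫_ℝ t := by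
          have := (hφ b (η u)).hasFDerivAt.comp_hasDerivAt t l2
          simpa [Function.comp_def] using this
        have m2 : HasDerivAt (fun t : ℝ => ⟪φ' b zs, (y0 + t • (y - y0)) - zs⟫_ℝ) 0 t := by
          have : (fun t : ℝ => ⟪φ' b zs, (y0 + t • (y - y0)) - zs⟫_ℝ) = fun _ => ⟪φ' b zs, y0 - zs⟫_ℝ := by
            funext t
            rw [add_sub_right_comm, inner_add_right, inner_smul_right, hv b]; simp
          rw [this]; exact hasDerivAt_const _ _
        have m3 : (fun t : ℝ => φ b (η (y0 + t • (y - y0)))) =ᶠ[𝓝 t]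
            fun t : ℝ => ⟪φ' b zs, (y0 + t • (y - y0)) - zs⟫_ℝ := by
          have : ∀ᶠ t' in 𝓝 t, y0 + t' • (y - y0) ∈ Metric.ball zs δ :=
            l1.continuousAt.tendsto.eventually (Metric.isOpen_ball.mem_nhds hub)
          filter_upwards [this] with t' ht'
          rw [← Θin b, (hδ _ ht').1]
        exact (m1.congr_of_eventuallyEq m3.symm).unique m2
      have l5 : ⟪ψ' (η u), fderiv ℝ η u (y - y0)⟫_ℝ = 0 := by
        refine Submodule.span_induction (p := fun w _ => ⟪w, fderiv ℝ η u (y - y0)⟫_ℝ = 0) ?_ ?_ ?_ ?_ su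
        · rintro _ ⟨b, rfl⟩; exact l4 b
        · simp
        · intro p q _ _ hp hq; rw [inner_add_left, hp, hq, add_zero]
        · intro c p _ hp; rw [inner_smul_left, hp, mul_zero]
      rwa [l5] at l3
    have := constant_of_has_deriv_right_zero
      (f := fun t : ℝ => ψ (η (y0 + t • (y - y0)))) (a := 0) (b := 1)
      (fun t ht => (hd t ht).continuousAt.continuousWithinAt)
      (fun t ht => (hd t ⟨ht.1, ht.2.le⟩).hasDerivWithinAt) 1 (by simp)
    simpa using this
  have e1 : ψ x = ψ (η y0) := by rw [← hconst, h4]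
  rw [e1]
  refine h3.trans ?_
  have e2 : ‖y0 - zs‖ ≤ M * ∑ c, |φ c x| := by
    rw [hy0, add_sub_cancel_left]
    refine (norm_sum_le _ _).trans ?_
    rw [Finset.mul_sum]
    refine Finset.sum_le_sum fun c _ => ?_
    rw [norm_smul, Real.norm_eq_abs, mul_comm]
    refine mul_le_mul_of_nonneg_right ?_ (abs_nonneg _)
    have := Finset.single_le_sum (f := fun c => ‖a c‖) (fun i _ => norm_nonneg _) (Finset.mem_univ c)
    rw [hM]; linarith
  calc ε / M * ‖y0 - zs‖ ≤ ε / M * (M * ∑ c, |φ c x|) :=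
        mul_le_mul_of_nonneg_left e2 (by positivity)
    _ = ε * ∑ c, |φ c x| := by field_simp

theorem aux_ext {α V : Type*} [Fintype α] [AddCommGroup V] [Module ℝ V] (S : Set α) [Fintype S] (l : S → ℝ)
    (v : α → V) : ∑ s : S, l s • v s = ∑ a, (if h : a ∈ S then l ⟨a, h⟩ else 0) • v a := by
  have h1 : ∑ s : S, l s • v s = ∑ s : S, (if h : (s : α) ∈ S then l ⟨s, h⟩ else 0) • v s := by
    refine Finset.sum_congr rfl fun s _ => ?_
    simp
  rw [h1, ← Finset.sum_subtype (Finset.univ.filter (· ∈ S)) (p := (· ∈ S)) (by simp)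
    (fun a => (if h : a ∈ S then l ⟨a, h⟩ else 0) • v a)]
  rw [Finset.sum_filter]
  refine Finset.sum_congr rfl fun a _ => ?_
  split_ifs <;> simp

theorem aux_gsum {n : ℕ} {α : Type*} (s : Finset α) (φ : α → Euc n → ℝ) (v : α → Euc n)
    (c : α → ℝ) (z : Euc n) (h : ∀ a, HasGradientAt (φ a) (v a) z) :
    HasGradientAt (fun z => ∑ a ∈ s, c a * φ a z) (∑ a ∈ s, c a • v a) z := by
  rw [hasGradientAt_iff_hasFDerivAt]
  have := HasFDerivAt.fun_sum (u := s) fun a _ => ((h a).hasFDerivAt.const_mul (c a))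
  refine this.congr_fderiv ?_
  simp [map_sum]

theorem aux_CRSC {n : ℕ} {ι κ : Type*} [Fintype ι] [Fintype κ]
    (g : ι → Euc n → ℝ) (g' : ι → Euc n → Euc n) (e : κ → Euc n → ℝ) (e' : κ → Euc n → Euc n)
    (hg : ∀ i z, HasGradientAt (g i) (g' i z) z) (he : ∀ i z, HasGradientAt (e i) (e' i z) z)
    (cg : ∀ i, Continuous (g' i)) (ce : ∀ i, Continuous (e' i))
    (zs : Euc n) (hgz : ∀ i, g i zs ≤ 0) (hez : ∀ j, e j zs = 0)
    (J : Set ι) (hJ : ∀ i ∈ J, g i zs = 0)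
    (H1 : ∃ (μ : ι → ℝ) (ν : κ → ℝ), (∀ i ∈ J, 1 ≤ μ i) ∧ (∀ i ∉ J, μ i = 0) ∧
      (∑ i, μ i • g' i zs) + (∑ j, ν j • e' j zs) = 0)
    (H2 : ∀ (l : ι → ℝ) (ν : κ → ℝ), (∀ i ∉ J, 0 ≤ l i) → (∀ i, g i zs ≠ 0 → l i = 0) →
      (∑ i, l i • g' i zs) + (∑ j, ν j • e' j zs) = 0 → ∀ i ∉ J, l i = 0)
    (H3 : ∀ᶠ z in 𝓝 zs, Set.finrank ℝ ((fun i => g' i z) '' J ∪ Set.range (fun j => e' j z)) =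
      Set.finrank ℝ ((fun i => g' i zs) '' J ∪ Set.range (fun j => e' j zs))) :
    ∃ α > (0:ℝ), ∀ᶠ x in 𝓝 zs, ∃ y, (∀ i, g i y ≤ 0) ∧ (∀ j, e j y = 0) ∧
      ‖x - y‖ ≤ α * ((∑ i, max (g i x) 0) + ∑ j, |e j x|) := by
  have gc : ∀ i, Continuous (g i) := fun i =>
    continuous_iff_continuousAt.2 fun z => (hg i z).continuousAt
  have ec : ∀ i, Continuous (e i) := fun i =>
    continuous_iff_continuousAt.2 fun z => (he i z).continuousAt
  set φ : ι ⊕ κ → Euc n → ℝ := Sum.elim g e with hφ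
  set φ' : ι ⊕ κ → Euc n → Euc n := Sum.elim g' e' with hφ'
  have dφ : ∀ t z, HasGradientAt (φ t) (φ' t z) z := by
    rintro (i | j) z
    · exact hg i z
    · exact he j z
  have cφ : ∀ t, Continuous (φ' t) := by
    rintro (i | j)
    · exact cg i
    · exact ce j
  have kφ : ∀ t, Continuous (φ t) := by
    rintro (i | j)
    · exact gc i
    · exact ec j
  set T : Set (ι ⊕ κ) := Sum.inl '' J ∪ Set.range Sum.inr with hT
  have hTim : ∀ z, (fun t => φ' t z) '' T = (fun i => g' i z) '' J ∪ Set.range (fun j => e' j z) := by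
    intro z
    rw [hT, Set.image_union, Set.image_image, ← Set.range_comp]
    rfl
  have φz : ∀ t ∈ T, φ t zs = 0 := by
    rintro _ (⟨i, hi, rfl⟩ | ⟨j, rfl⟩)
    · exact hJ i hi
    · exact hez j
  obtain ⟨B, hBT, -, hBs, hBi⟩ := exists_linearIndepOn_extension
    (linearIndepOn_empty ℝ (fun t => φ' t zs)) (Set.empty_subset T)
  have hBi' : LinearIndependent ℝ (fun b : B => φ' b zs) := hBi
  have hBr : ∀ z, (fun t => φ' t z) '' B = Set.range (fun b : B => φ' b z) := by
    intro z; rw [Set.image_eq_range]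
  have ev1 : ∀ᶠ z in 𝓝 zs, LinearIndependent ℝ (fun b : B => φ' b z) := by
    have : Tendsto (fun z => fun b : B => φ' b z) (𝓝 zs) (𝓝 (fun b : B => φ' b zs)) :=
      tendsto_pi_nhds.2 fun b => (cφ b).tendsto zs
    exact this.eventually hBi'.eventually
  have ev2 : ∀ᶠ z in 𝓝 zs, ∀ t ∈ T, φ' t z ∈ Submodule.span ℝ (Set.range fun b : B => φ' b z) := by
    filter_upwards [ev1, H3] with z h1 h3 t ht
    rw [← hTim, ← hTim] at h3
    have hle : Submodule.span ℝ (Set.range fun b : B => φ' b z) ≤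
        Submodule.span ℝ ((fun t => φ' t z) '' T) := by
      rw [← hBr]; exact Submodule.span_mono (Set.image_mono hBT)
    have h4 : Submodule.span ℝ ((fun t => φ' t zs) '' T) =
        Submodule.span ℝ (Set.range fun b : B => φ' b zs) := by
      rw [← hBr]
      exact le_antisymm (Submodule.span_le.2 hBs) (Submodule.span_mono (Set.image_mono hBT))
    have h5 := finrank_span_eq_card h1
    have h6 := finrank_span_eq_card hBi'
    have h7 := Submodule.eq_of_le_of_finrank_le hle (by
      unfold Set.finrank at h3
      rw [h3, h4, h5, h6])
    rw [h7]
    exact Submodule.subset_span ⟨t, ht, rfl⟩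
  -- dependence
  have dep : ∀ t ∈ T, ∃ C : ℝ, ∀ᶠ x in 𝓝 zs, |φ t x| ≤ C * ∑ b : B, |φ b x| := by
    intro t ht
    have h1 := hBs ⟨t, ht, rfl⟩
    rw [SetLike.mem_coe, hBr, Submodule.mem_span_range_iff_exists_fun] at h1
    obtain ⟨c, hc⟩ := h1
    refine ⟨1 + ∑ b, |c b|, ?_⟩
    have := aux_CR (fun b : B => φ b) (fun b : B => φ' b)
      (fun z => φ t z - ∑ b, c b * φ b z) (fun z => φ' t z - ∑ b, c b • φ' b z)
      (fun b z => dφ b z) (fun z => by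
        have a1 := (dφ t z).hasFDerivAt.sub (aux_gsum Finset.univ (fun b : B => φ b) (fun b : B => φ' b z) c z
          (fun b => dφ b z)).hasFDerivAt
        rw [hasGradientAt_iff_hasFDerivAt, map_sub]
        exact a1)
      (fun b => cφ b) ((cφ t).sub (continuous_finsetSum _ fun b _ => (cφ b).const_smul (c b)))
      zs (fun b => φz b (hBT b.2)) (by simp [φz t ht, fun b : B => φz b (hBT b.2)])
      (by rw [hc, sub_self]) hBi'
      (by
        filter_upwards [ev2] with z hz
        refine Submodule.sub_mem _ (hz t ht) (Submodule.sum_mem _ fun b _ => Submodule.smul_mem _ _ ?_)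
        exact Submodule.subset_span ⟨b, rfl⟩) 1 one_pos
    filter_upwards [this] with x hx
    have a1 : |∑ b, c b * φ b x| ≤ (∑ b, |c b|) * ∑ b : B, |φ b x| := by
      refine (Finset.abs_sum_le_sum_abs _ _).trans ?_
      rw [Finset.sum_mul]
      refine Finset.sum_le_sum fun b _ => ?_
      rw [abs_mul]
      refine mul_le_mul_of_nonneg_left ?_ (abs_nonneg _)
      exact Finset.single_le_sum (f := fun b : B => |φ b x|) (fun i _ => abs_nonneg _) (Finset.mem_univ b)
    have a2 : |φ t x| ≤ |φ t x - ∑ b, c b * φ b x| + |∑ b, c b * φ b x| := by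
      simpa using abs_add_le (φ t x - ∑ b, c b * φ b x) (∑ b, c b * φ b x)
    linarith
  have ev3 : ∀ᶠ x in 𝓝 zs, (∀ b : B, φ b x = 0) → ∀ t ∈ T, φ t x = 0 := by
    have : ∀ᶠ x in 𝓝 zs, ∀ t : T, ∃ C : ℝ, |φ t x| ≤ C * ∑ b : B, |φ b x| := by
      rw [eventually_all]
      intro t
      obtain ⟨C, hC⟩ := dep t t.2
      filter_upwards [hC] with x hx using ⟨C, hx⟩
    filter_upwards [this] with x hx hb t ht
    obtain ⟨C, hC⟩ := hx ⟨t, ht⟩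
    simpa [hb] using hC
  obtain ⟨α₁, α₁0, hEB⟩ := aux_EB (fun i : (Jᶜ : Set ι) => g i) (fun i : (Jᶜ : Set ι) => g' i)
    (fun b : B => φ b) (fun b : B => φ' b) (fun i z => hg i z) (fun b z => dφ b z)
    (fun i => cg i) (fun b => cφ b) zs (fun i => hgz i) (fun b => φz b (hBT b.2)) (by
      rintro l μ hl hst ⟨y, hy, hyk⟩
      have hst0 := hst
      have hB0 : ∀ i, i ∉ J → Sum.inl i ∉ B := by
        intro i hi hb
        rcases hBT hb with ⟨i', hi', h⟩ | ⟨j, h⟩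
        · cases h; exact hi hi'
        · cases h
      rw [aux_ext Jᶜ l (fun i => g' i zs), aux_ext B μ (fun t => φ' t zs), Fintype.sum_sum_type,
        ← add_assoc, ← Finset.sum_add_distrib] at hst
      simp only [hφ', Sum.elim_inl, Sum.elim_inr, ← add_smul] at hst
      have hh := H2 _ _ (by
        intro i hi
        rw [dif_pos (show i ∈ Jᶜ from hi), dif_neg (hB0 i hi), add_zero]; exact hl _) (by
        intro i hi
        have hiJ : i ∉ J := fun h => hi (hJ i h)
        rw [dif_pos (show i ∈ Jᶜ from hiJ), dif_neg (hB0 i hiJ), add_zero]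
        by_contra hne
        have h1 : Tendsto (fun k => g i (y k)) atTop (𝓝 (g i zs)) := ((gc i).tendsto zs).comp hy
        have h2 : 0 ≤ g i zs := ge_of_tendsto' h1 fun k => ((hyk k).1 ⟨i, hiJ⟩ hne).le
        exact hi (le_antisymm (hgz i) h2)) hst
      have hl0 : l = 0 := by
        funext i
        have := hh i i.2
        rwa [dif_pos i.2, dif_neg (hB0 i i.2), add_zero] at this
      refine ⟨hl0, ?_⟩
      rw [hl0] at hst0
      simp only [Pi.zero_apply, zero_smul, Finset.sum_const_zero, zero_add] at hst0
      funext b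
      exact Fintype.linearIndependent_iff.1 hBi' μ hst0 b)
  obtain ⟨μ, ν, hμ1, hμ0, hμν⟩ := H1
  set ψ : Euc n → ℝ := fun z => ∑ t, (Sum.elim μ ν t) * φ t z with hψ
  have hmem : ∀ t, t ∉ T → Sum.elim μ ν t = 0 := by
    rintro (i | j) ht
    · exact hμ0 i fun h => ht (Or.inl ⟨i, h, rfl⟩)
    · exact absurd (Or.inr ⟨j, rfl⟩) ht
  have ev4 := aux_CR (fun b : B => φ b) (fun b : B => φ' b)
      ψ (fun z => ∑ t, (Sum.elim μ ν t) • φ' t z)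
      (fun b z => dφ b z) (fun z => aux_gsum Finset.univ φ (fun t => φ' t z) _ z (fun t => dφ t z))
      (fun b => cφ b) (continuous_finsetSum _ fun b _ => (cφ b).fun_const_smul _)
      zs (fun b => φz b (hBT b.2)) (by
        refine Finset.sum_eq_zero fun t _ => ?_
        by_cases ht : t ∈ T
        · rw [φz t ht, mul_zero]
        · rw [hmem t ht, zero_mul])
      (by simpa [Fintype.sum_sum_type, hφ'] using hμν) hBi'
      (by
        filter_upwards [ev2] with z hz
        refine Submodule.sum_mem _ fun t _ => ?_
        by_cases ht : t ∈ T
        · exact Submodule.smul_mem _ _ (hz t ht)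
        · rw [hmem t ht, zero_smul]; exact Submodule.zero_mem _) (1/2) one_half_pos
  set M : ℝ := 1 + (∑ i, |μ i|) + ∑ j, |ν j| with hM
  have Mμ : ∀ i, |μ i| ≤ M := fun i => by
    have h1 := Finset.single_le_sum (f := fun i => |μ i|) (fun i _ => abs_nonneg _) (Finset.mem_univ i)
    have h2 : 0 ≤ ∑ j, |ν j| := by positivity
    linarith
  have Mν : ∀ i, |ν i| ≤ M := fun i => by
    have h1 := Finset.single_le_sum (f := fun i => |ν i|) (fun i _ => abs_nonneg _) (Finset.mem_univ i)
    have h2 : 0 ≤ ∑ j, |μ j| := by positivity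
    linarith
  have M1 : 1 ≤ M := by
    have h1 : 0 ≤ ∑ j, |ν j| := by positivity
    have h2 : 0 ≤ ∑ j, |μ j| := by positivity
    linarith
  refine ⟨α₁ * (4 * M + 4), by positivity, ?_⟩
  obtain ⟨δ, δ0, hδ⟩ := Metric.eventually_nhds_iff_ball.1 ev3
  have ev5 : ∀ᶠ x in 𝓝 zs, α₁ * ((∑ i : (Jᶜ : Set ι), max (g i x) 0) + ∑ b : B, |φ b x|) < δ / 2 := by
    have hc : Continuous fun x => α₁ * ((∑ i : (Jᶜ : Set ι), max (g i x) 0) + ∑ b : B, |φ b x|) := by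
      fun_prop
    have := hc.tendsto zs
    refine this.eventually_lt_const ?_
    have h1 : ∀ b : B, φ b zs = 0 := fun b => φz b (hBT b.2)
    simp [h1, hgz, δ0]
  filter_upwards [hEB, ev4, ev5, Metric.ball_mem_nhds zs (half_pos δ0)] with x ⟨y, hy1, hy2, hy3⟩ h4 h5 h6
  have hyz : y ∈ Metric.ball zs δ := by
    rw [Metric.mem_ball] at h6 ⊢
    have := dist_triangle y x zs
    rw [dist_comm y x, dist_eq_norm x y] at this
    linarith
  have hyT := hδ y hyz hy2
  refine ⟨y, fun i => ?_, fun j => hyT (Sum.inr j) (Or.inr ⟨j, rfl⟩), ?_⟩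
  · by_cases hi : i ∈ J
    · exact (hyT (Sum.inl i) (Or.inl ⟨i, hi, rfl⟩)).le
    · exact hy1 ⟨i, hi⟩
  refine hy3.trans ?_
  rw [mul_assoc]
  refine mul_le_mul_of_nonneg_left ?_ α₁0.le
  set s : ℝ := ∑ i, if i ∈ J then |g i x| else 0 with hs
  set Sg : ℝ := ∑ i, max (g i x) 0 with hSg
  set Se : ℝ := ∑ j, |e j x| with hSe
  have Sg0 : 0 ≤ Sg := by positivity
  have Se0 : 0 ≤ Se := by positivity
  have b1 : ∑ i : (Jᶜ : Set ι), max (g i x) 0 ≤ Sg := by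
    have := aux_ext (Jᶜ) (fun _ => (1:ℝ)) (fun i => max (g i x) 0)
    simp only [one_smul] at this
    rw [this]
    refine Finset.sum_le_sum fun i _ => ?_
    split_ifs <;> simp
  have b2 : ∑ b : B, |φ b x| ≤ s + Se := by
    have := aux_ext B (fun _ => (1:ℝ)) (fun i => |φ i x|)
    simp only [one_smul] at this
    rw [this, Fintype.sum_sum_type]
    refine add_le_add (Finset.sum_le_sum fun i _ => ?_) (Finset.sum_le_sum fun j _ => ?_)
    · by_cases hi : Sum.inl i ∈ B
      · have hiJ : i ∈ J := by
          rcases hBT hi with ⟨i', hi', h⟩ | ⟨j, h⟩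
          · cases h; exact hi'
          · cases h
        rw [dif_pos hi, if_pos hiJ, one_smul]; exact le_rfl
      · rw [dif_neg hi, zero_smul]; split_ifs <;> positivity
    · split_ifs
      · rw [one_smul]; exact le_rfl
      · rw [zero_smul]; positivity
  have b3 : s ≤ 2 * M * Sg - ∑ i, μ i * g i x := by
    rw [hSg, Finset.mul_sum, ← Finset.sum_sub_distrib]
    refine Finset.sum_le_sum fun i _ => ?_
    have hm : 0 ≤ max (g i x) 0 := le_max_right _ _
    split_ifs with hi
    · have h1 := hμ1 i hi
      have h2 := (le_abs_self _).trans (Mμ i)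
      have h3 : |g i x| = 2 * max (g i x) 0 - g i x := by
        rcases le_total (g i x) 0 with h | h
        · rw [abs_of_nonpos h, max_eq_right h]; ring
        · rw [abs_of_nonneg h, max_eq_left h]; ring
      have h4 : |g i x| ≤ μ i * |g i x| := le_mul_of_one_le_left (abs_nonneg _) h1
      rw [h3] at h4
      rw [h3]
      nlinarith
    · rw [hμ0 i hi]
      have := mul_nonneg (by linarith : (0:ℝ) ≤ 2 * M) hm
      linarith
  have b4 : ψ x = (∑ i, μ i * g i x) + ∑ j, ν j * e j x := by
    simp [hψ, Fintype.sum_sum_type, hφ]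
  have b5 : ∑ j, ν j * e j x ≤ M * Se := by
    rw [hSe, Finset.mul_sum]
    refine Finset.sum_le_sum fun j _ => ?_
    refine (le_abs_self _).trans ?_
    rw [abs_mul]
    exact mul_le_mul_of_nonneg_right (Mν j) (abs_nonneg _)
  have b6 := (abs_le.1 h4).1
  have b7 : 0 ≤ M * Sg := by positivity
  have b8 : 0 ≤ M * Se := by positivity
  nlinarith

namespace MPSC

variable {n p q m : ℕ} (P : MPSC n p q m)

/-- Equality constraints of the branch determined by `b`. -/
def eB (b : Set (Fin m)) : Fin q ⊕ Fin m → Euc n → ℝ :=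
  Sum.elim P.h (fun i => if i ∈ b then P.G i else P.H i)

/-- Gradients of the equality constraints of the branch determined by `b`. -/
def eB' (b : Set (Fin m)) : Fin q ⊕ Fin m → Euc n → Euc n :=
  Sum.elim P.h' (fun i => if i ∈ b then P.G' i else P.H' i)

theorem grad_eB (b : Set (Fin m)) (t : Fin q ⊕ Fin m) (z : Euc n) :
    HasGradientAt (P.eB b t) (P.eB' b t z) z := by
  rcases t with j | i
  · exact P.grad_h j z
  · simp only [eB, eB', Sum.elim_inr]
    split_ifs
    · exact P.grad_G i z
    · exact P.grad_H i z

theorem cont_eB' (b : Set (Fin m)) (t : Fin q ⊕ Fin m) : Continuous (P.eB' b t) := by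
  rcases t with j | i
  · exact P.cont_h' j
  · simp only [eB', Sum.elim_inr]
    split_ifs
    · exact P.cont_G' i
    · exact P.cont_H' i

theorem eB_sum (b : Set (Fin m)) (ν : Fin q ⊕ Fin m → ℝ) (z : Euc n) :
    ∑ t, ν t • P.eB' b t z = (∑ j, ν (Sum.inl j) • P.h' j z) +
      ∑ i, ((if i ∈ b then ν (Sum.inr i) else 0) • P.G' i z +
        (if i ∈ b then 0 else ν (Sum.inr i)) • P.H' i z) := by
  rw [Fintype.sum_sum_type]
  congr 1
  refine Finset.sum_congr rfl fun i _ => ?_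
  simp only [eB', Sum.elim_inr]
  split_ifs <;> simp

theorem eB_zs {zs : Euc n} (hf : zs ∈ P.Feas) {b : Set (Fin m)} (hb1 : P.IGs zs ⊆ b)
    (hb2 : ∀ i ∈ P.IHs zs, i ∉ b) (t : Fin q ⊕ Fin m) : P.eB b t zs = 0 := by
  rcases t with j | i
  · exact hf.2.1 j
  · simp only [eB, Sum.elim_inr]
    have h := mul_eq_zero.1 (hf.2.2 i)
    split_ifs with hi
    · by_contra hne
      exact hb2 i ⟨hne, h.resolve_left hne⟩ hi
    · by_contra hne
      exact hi (hb1 ⟨h.resolve_right hne, hne⟩)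

theorem branch_QN {zs : Euc n} (hf : zs ∈ P.Feas) {b : Set (Fin m)} (hb1 : P.IGs zs ⊆ b)
    (hb2 : ∀ i ∈ P.IHs zs, i ∉ b) (hq : P.DirQuasiNormal zs) :
    ∃ α > (0:ℝ), ∀ᶠ x in 𝓝 zs, ∃ y, (∀ i, P.g i y ≤ 0) ∧ (∀ j, P.eB b j y = 0) ∧
      ‖x - y‖ ≤ α * ((∑ i, max (P.g i x) 0) + ∑ j, |P.eB b j x|) := by
  refine aux_EB P.g P.g' (P.eB b) (P.eB' b) P.grad_g (P.grad_eB b) P.cont_g' (P.cont_eB' b) zs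
    hf.1 (P.eB_zs hf hb1 hb2) ?_
  rintro l μ hl hst ⟨y, hy, hyk⟩
  have h0 : (0 : Euc n) ∈ P.LinCone zs := by
    simp [LinCone]
  have hq0 := hq 0 h0 l (fun j => μ (Sum.inl j)) (fun i => if i ∈ b then μ (Sum.inr i) else 0)
    (fun i => if i ∈ b then 0 else μ (Sum.inr i))
    (by rw [eB_sum, ← add_assoc] at hst; exact hst.symm)
    (by
      refine ⟨fun i _ => hl i, ?_, ?_, ?_, ?_⟩
      · intro i hi
        by_contra hne
        have h1 : Tendsto (fun k => P.g i (y k)) atTop (𝓝 (P.g i zs)) :=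
          (P.grad_g i zs).continuousAt.tendsto.comp hy
        have h2 : 0 ≤ P.g i zs := ge_of_tendsto' h1 fun k => ((hyk k).1 i hne).le
        exact hi ⟨le_antisymm (hf.1 i) h2, by simp⟩
      · rintro i (hi | hi)
        · simp [hb1 hi]
        · exact absurd hi.2.2 (by simp)
      · rintro i (hi | hi)
        · simp [hb2 i hi]
        · exact absurd hi.2.1 (by simp)
      · intro i _
        split_ifs <;> simp)
    (by
      have hs : ∀ k : ℕ, 0 < √‖y k - zs‖ + 1 / ((k:ℝ) + 1) := fun k => by positivity
      have hn : Tendsto (fun k => √‖y k - zs‖) atTop (𝓝 0) := by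
        have := (Real.continuous_sqrt.tendsto 0).comp (tendsto_iff_norm_sub_tendsto_zero.1 hy)
        simpa [Function.comp_def] using this
      refine ⟨fun k => (√‖y k - zs‖ + 1 / ((k:ℝ) + 1))⁻¹ • (y k - zs),
        fun k => √‖y k - zs‖ + 1 / ((k:ℝ) + 1), ?_, hs, ?_, ?_⟩
      · rw [tendsto_zero_iff_norm_tendsto_zero]
        refine squeeze_zero (fun _ => norm_nonneg _) (fun k => ?_) hn
        rw [norm_smul, norm_inv, Real.norm_eq_abs, abs_of_pos (hs k), inv_mul_eq_div, div_le_iff₀ (hs k)]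
        have h1 := Real.mul_self_sqrt (norm_nonneg (y k - zs))
        have h2 : 0 ≤ √‖y k - zs‖ * (1 / ((k:ℝ) + 1)) := by positivity
        linarith
      · simpa using hn.add (tendsto_one_div_add_atTop_nhds_zero_nat (𝕜 := ℝ))
      · intro k
        simp only [smul_inv_smul₀ (hs k).ne', add_sub_cancel]
        have hk := hyk k
        refine ⟨fun i hi => mul_pos (lt_of_le_of_ne (hl i) (Ne.symm hi)) (hk.1 i hi),
          fun j hj => hk.2 (Sum.inl j) hj, fun i hi => ?_, fun i hi => ?_⟩
        · by_cases hib : i ∈ b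
          · have := hk.2 (Sum.inr i) (by simpa [hib] using hi)
            simpa [hib, eB] using this
          · simp [hib] at hi
        · by_cases hib : i ∈ b
          · simp [hib] at hi
          · have := hk.2 (Sum.inr i) (by simpa [hib] using hi)
            simpa [hib, eB] using this)
  refine ⟨hq0.1, ?_⟩
  funext t
  rcases t with j | i
  · exact congrFun hq0.2.1 j
  · have h1 := congrFun hq0.2.2.1 i
    have h2 := congrFun hq0.2.2.2 i
    by_cases hib : i ∈ b
    · simpa [hib] using h1
    · simpa [hib] using h2

theorem branch_CRSC {zs : Euc n} (hf : zs ∈ P.Feas) {b : Set (Fin m)} (hb1 : P.IGs zs ⊆ b)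
    (hb2 : ∀ i ∈ P.IHs zs, i ∉ b) (hq : P.PiecewiseCRSC zs) :
    ∃ α > (0:ℝ), ∀ᶠ x in 𝓝 zs, ∃ y, (∀ i, P.g i y ≤ 0) ∧ (∀ j, P.eB b j y = 0) ∧
      ‖x - y‖ ≤ α * ((∑ i, max (P.g i x) 0) + ∑ j, |P.eB b j x|) := by
  set b1 := P.IGH zs ∩ b with hb1d
  set b2 := P.IGH zs \ b with hb2d
  have e1 : P.IGs zs ∪ b1 = b := by
    ext i
    constructor
    · rintro (h | h)
      · exact hb1 h
      · exact h.2
    · intro hi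
      have hG : P.G i zs = 0 := by
        have := P.eB_zs hf hb1 hb2 (Sum.inr i)
        simpa [eB, hi] using this
      by_cases hH : P.H i zs = 0
      · exact Or.inr ⟨⟨hG, hH⟩, hi⟩
      · exact Or.inl ⟨hG, hH⟩
  have e2 : P.IHs zs ∪ b2 = bᶜ := by
    ext i
    constructor
    · rintro (h | h)
      · exact hb2 i h
      · exact h.2
    · intro hi
      have hi : i ∉ b := hi
      have hH : P.H i zs = 0 := by
        have := P.eB_zs hf hb1 hb2 (Sum.inr i)
        simpa [eB, hi] using this
      by_cases hG : P.G i zs = 0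
      · exact Or.inr ⟨⟨hG, hH⟩, hi⟩
      · exact Or.inl ⟨hG, hH⟩
  have hcr := hq b1 b2 (Set.inter_union_diff _ _) (by
    ext i; simp only [hb1d, hb2d, Set.mem_inter_iff, Set.mem_diff, Set.mem_empty_iff_false]; tauto)
  set J := P.Iminus zs b1 b2 with hJ
  have fwd : ∀ l ∈ J, ∃ (lam : Fin p → ℝ) (ν : Fin q ⊕ Fin m → ℝ), (∀ i, 0 ≤ lam i) ∧
      (∀ i, P.g i zs ≠ 0 → lam i = 0) ∧ 1 ≤ lam l ∧
      (∑ i, lam i • P.g' i zs) + ∑ t, ν t • P.eB' b t zs = 0 := by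
    rintro l ⟨hl, lh, lG, lH, mu, h1, h2, h3, h4, h5⟩
    rw [e1] at h1
    rw [e2] at h2
    refine ⟨fun i => mu i + if i = l then 1 else 0, Sum.elim lh (fun i => lG i + lH i), ?_, ?_, ?_, ?_⟩
    · intro i
      have := h3 i
      simp only
      split_ifs <;> linarith
    · intro i hi
      have h6 : i ≠ l := fun h => hi (h ▸ hl)
      simp only [h6, if_false, add_zero]
      exact h4 i fun h => hi h.1
    · simpa using h3 l
    · rw [eB_sum]
      simp only [add_smul, Finset.sum_add_distrib, ite_smul, one_smul, zero_smul,
        Finset.sum_ite_eq', Finset.mem_univ, if_true, Sum.elim_inl, Sum.elim_inr]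
      have h6 : P.g' l zs = -((∑ j, lh j • P.h' j zs)
        + (∑ i, (lG i • P.G' i zs + lH i • P.H' i zs)) + (∑ i, mu i • P.g' i zs)) := by
        rw [← h5, neg_neg]
      have h7 : ∀ i, (if i ∈ b then lG i • P.G' i zs + lH i • P.G' i zs else 0) = lG i • P.G' i zs := by
        intro i
        split_ifs with hi
        · rw [h2 i (by simpa using hi), zero_smul, add_zero]
        · rw [h1 i hi, zero_smul]
      have h8 : ∀ i, (if i ∈ b then 0 else lG i • P.H' i zs + lH i • P.H' i zs) = lH i • P.H' i zs := by
        intro i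
        split_ifs with hi
        · rw [h2 i (by simpa using hi), zero_smul]
        · rw [h1 i hi, zero_smul, zero_add]
      simp only [h7, h8]
      rw [h6, Finset.sum_add_distrib]
      abel
  have bwd : ∀ (l : Fin p) (lam : Fin p → ℝ) (ν : Fin q ⊕ Fin m → ℝ), (∀ i, 0 ≤ lam i) →
      (∀ i, P.g i zs ≠ 0 → lam i = 0) → 0 < lam l →
      (∑ i, lam i • P.g' i zs) + ∑ t, ν t • P.eB' b t zs = 0 → l ∈ J := by
    intro l lam ν h1 h2 h3 h4
    have hl : P.g l zs = 0 := by
      by_contra h; exact h3.ne' (h2 l h)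
    refine ⟨hl, fun j => (lam l)⁻¹ * ν (Sum.inl j),
      fun i => (lam l)⁻¹ * (if i ∈ b then ν (Sum.inr i) else 0),
      fun i => (lam l)⁻¹ * (if i ∈ b then 0 else ν (Sum.inr i)),
      fun i => (lam l)⁻¹ * (if i = l then 0 else lam i), ?_, ?_, ?_, ?_, ?_⟩
    · intro i hi
      rw [e1] at hi; simp [hi]
    · intro i hi
      rw [e2] at hi
      have : i ∈ b := by simpa using hi
      simp [this]
    · intro i
      refine mul_nonneg (inv_nonneg.2 h3.le) ?_
      split_ifs
      · exact le_rfl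
      · exact h1 i
    · intro i hi
      by_cases hil : i = l
      · simp [hil]
      · have : P.g i zs ≠ 0 := fun h => hi ⟨h, hil⟩
        simp [h2 i this]
    · rw [eB_sum] at h4
      simp only [mul_smul, ← smul_add, ← Finset.smul_sum]
      have h5 : ∑ i, lam i • P.g' i zs = lam l • P.g' l zs + ∑ i, (if i = l then 0 else lam i) • P.g' i zs := by
        have : ∀ i, lam i • P.g' i zs = (if i = l then lam l • P.g' l zs else 0) +
            (if i = l then 0 else lam i) • P.g' i zs := by
          intro i
          split_ifs with h
          · simp [h]
          · simp
        rw [Finset.sum_congr rfl fun i _ => this i, Finset.sum_add_distrib]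
        simp
      rw [h5] at h4
      rw [eq_inv_smul_iff₀ h3.ne', smul_neg, neg_eq_iff_add_eq_zero, ← h4]
      abel
  have H1 : ∃ (μ : Fin p → ℝ) (ν : Fin q ⊕ Fin m → ℝ), (∀ i ∈ J, 1 ≤ μ i) ∧ (∀ i ∉ J, μ i = 0) ∧
      (∑ i, μ i • P.g' i zs) + (∑ j, ν j • P.eB' b j zs) = 0 := by
    choose! lam ν k1 k2 k3 k4 using fwd
    refine ⟨fun i => ∑ l ∈ Finset.univ.filter (· ∈ J), lam l i,
      fun t => ∑ l ∈ Finset.univ.filter (· ∈ J), ν l t, ?_, ?_, ?_⟩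
    · intro i hi
      refine (k3 i hi).trans ?_
      exact Finset.single_le_sum (f := fun l => lam l i)
        (fun l hl => k1 l (by simpa using hl) i) (by simpa using hi)
    · intro i hi
      refine Finset.sum_eq_zero fun l hl => ?_
      have hl : l ∈ J := by simpa using hl
      by_contra hne
      exact hi (bwd i (lam l) (ν l) (k1 l hl) (k2 l hl)
        (lt_of_le_of_ne (k1 l hl i) (Ne.symm hne)) (k4 l hl))
    · simp only [Finset.sum_smul]
      rw [Finset.sum_comm, Finset.sum_comm (s := (Finset.univ : Finset (Fin q ⊕ Fin m))),
        ← Finset.sum_add_distrib]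
      refine Finset.sum_eq_zero fun l hl => k4 l (by simpa using hl)
  refine aux_CRSC P.g P.g' (P.eB b) (P.eB' b) P.grad_g (P.grad_eB b) P.cont_g' (P.cont_eB' b) zs
    hf.1 (P.eB_zs hf hb1 hb2) J (fun i hi => hi.1) H1 ?_ ?_
  · obtain ⟨μ, ν0, m1, m0, mr⟩ := H1
    intro l ν hl hl' hr i hi
    by_contra hne
    set N : ℝ := ∑ i, |l i| with hN
    have hlN : ∀ i, |l i| ≤ N := fun i =>
      Finset.single_le_sum (f := fun i => |l i|) (fun i _ => abs_nonneg _) (Finset.mem_univ i)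
    have N0 : 0 ≤ N := by positivity
    refine hi (bwd i (fun i => l i + N * μ i) (fun t => ν t + N * ν0 t) ?_ ?_ ?_ ?_)
    · intro i
      by_cases hiJ : i ∈ J
      · have h1 := m1 i hiJ
        have h2 := (abs_le.1 (hlN i)).1
        nlinarith
      · simpa [m0 i hiJ] using hl i hiJ
    · intro i hi
      have : i ∉ J := fun h => hi h.1
      simp [m0 i this, hl' i hi]
    · simpa [m0 i hi] using lt_of_le_of_ne (hl i hi) (Ne.symm hne)
    · simp only [add_smul, mul_smul, Finset.sum_add_distrib, ← Finset.smul_sum]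
      have : ∀ a b c d : Euc n, a + b = 0 → c + d = 0 → a + N • c + (b + N • d) = 0 := by
        intro a b c d h1 h2
        have : a + N • c + (b + N • d) = (a + b) + N • (c + d) := by rw [smul_add]; abel
        rw [this, h1, h2]; simp
      exact this _ _ _ _ hr mr
  · have e3 : ∀ z, P.EqGrads zs b1 b2 z = Set.range (fun j => P.eB' b j z) := by
      intro z
      unfold EqGrads
      rw [e1, e2]
      ext v
      constructor
      · rintro ((⟨j, rfl⟩ | ⟨i, hi, rfl⟩) | ⟨i, hi, rfl⟩)
        · exact ⟨Sum.inl j, rfl⟩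
        · exact ⟨Sum.inr i, by simp [eB', hi]⟩
        · have hi : i ∉ b := hi
          exact ⟨Sum.inr i, by simp [eB', hi]⟩
      · rintro ⟨j | i, rfl⟩
        · exact Or.inl (Or.inl ⟨j, rfl⟩)
        · by_cases hi : i ∈ b
          · exact Or.inl (Or.inr ⟨i, hi, by simp [eB', hi]⟩)
          · exact Or.inr ⟨i, hi, by simp [eB', hi]⟩
    obtain ⟨U, hU, hUz⟩ := hcr
    filter_upwards [hU] with z hz
    have := hUz z hz
    rwa [e3, e3] at this

theorem residual_nonneg (z : Euc n) : 0 ≤ P.residual z := by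
  unfold residual
  have h1 : ∀ i, 0 ≤ min |P.G i z| |P.H i z| := fun i => le_min (abs_nonneg _) (abs_nonneg _)
  have h2 := Finset.sum_nonneg fun i (_ : i ∈ Finset.univ) => h1 i
  positivity

theorem errorBound_aux {zs : Euc n} (hf : zs ∈ P.Feas)
    (hcq : P.DirQuasiNormal zs ∨ P.PiecewiseCRSC zs) :
    ∃ α > (0:ℝ), ∀ᶠ x in 𝓝 zs, Metric.infDist x P.Feas ≤ α * P.residual x := by
  have hbr : ∀ b : Set (Fin m), P.IGs zs ⊆ b ∧ (∀ i ∈ P.IHs zs, i ∉ b) → 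
      ∃ α > (0:ℝ), ∀ᶠ x in 𝓝 zs, ∃ y, (∀ i, P.g i y ≤ 0) ∧ (∀ j, P.eB b j y = 0) ∧
      ‖x - y‖ ≤ α * ((∑ i, max (P.g i x) 0) + ∑ j, |P.eB b j x|) := by
    rintro b ⟨h1, h2⟩
    rcases hcq with h | h
    · exact P.branch_QN hf h1 h2 h
    · exact P.branch_CRSC hf h1 h2 h
  choose! A A0 hA using hbr
  have hev : ∀ᶠ x in 𝓝 zs, ∀ b : Set (Fin m), P.IGs zs ⊆ b ∧ (∀ i ∈ P.IHs zs, i ∉ b) →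
      ∃ y, (∀ i, P.g i y ≤ 0) ∧ (∀ j, P.eB b j y = 0) ∧
      ‖x - y‖ ≤ A b * ((∑ i, max (P.g i x) 0) + ∑ j, |P.eB b j x|) := by
    rw [eventually_all]
    intro b
    by_cases h : P.IGs zs ⊆ b ∧ (∀ i ∈ P.IHs zs, i ∉ b)
    · filter_upwards [hA b h] with x hx _ using hx
    · exact Eventually.of_forall fun x h' => absurd h' h
  have cG : ∀ i, ContinuousAt (fun x => |P.G i x|) zs := fun i => (P.grad_G i zs).continuousAt.abs
  have cH : ∀ i, ContinuousAt (fun x => |P.H i x|) zs := fun i => (P.grad_H i zs).continuousAt.abs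
  have hev1 : ∀ᶠ x in 𝓝 zs, ∀ i, i ∈ P.IGs zs → |P.G i x| < |P.H i x| := by
    rw [eventually_all]
    intro i
    by_cases h : i ∈ P.IGs zs
    · have : |P.G i zs| < |P.H i zs| := by rw [h.1, abs_zero]; exact abs_pos.2 h.2
      filter_upwards [(cG i).tendsto.eventually_lt (cH i).tendsto this] with x hx _ using hx
    · exact Eventually.of_forall fun x h' => absurd h' h
  have hev2 : ∀ᶠ x in 𝓝 zs, ∀ i, i ∈ P.IHs zs → |P.H i x| < |P.G i x| := by
    rw [eventually_all]
    intro i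
    by_cases h : i ∈ P.IHs zs
    · have : |P.H i zs| < |P.G i zs| := by rw [h.2, abs_zero]; exact abs_pos.2 h.1
      filter_upwards [(cH i).tendsto.eventually_lt (cG i).tendsto this] with x hx _ using hx
    · exact Eventually.of_forall fun x h' => absurd h' h
  refine ⟨1 + ∑ b : Set (Fin m), |A b|, by positivity, ?_⟩
  filter_upwards [hev, hev1, hev2] with x h0 h1 h2
  set b : Set (Fin m) := {i | |P.G i x| ≤ |P.H i x|} with hb
  obtain ⟨y, y1, y2, y3⟩ := h0 b ⟨fun i hi => (h1 i hi).le, fun i hi hib => absurd hib (not_le.2 (h2 i hi))⟩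
  have hyF : y ∈ P.Feas := by
    refine ⟨y1, fun j => y2 (Sum.inl j), fun i => ?_⟩
    have := y2 (Sum.inr i)
    simp only [eB, Sum.elim_inr] at this
    split_ifs at this
    · rw [this, zero_mul]
    · rw [this, mul_zero]
  have hres : (∑ i, max (P.g i x) 0) + ∑ j, |P.eB b j x| = P.residual x := by
    rw [Fintype.sum_sum_type, ← add_assoc]
    unfold residual
    congr 1
    refine Finset.sum_congr rfl fun i _ => ?_
    simp only [eB, Sum.elim_inr]
    by_cases hi : i ∈ b
    · rw [if_pos hi, min_eq_left hi]
    · rw [if_neg hi, min_eq_right (le_of_lt (not_le.1 hi))]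
  rw [hres] at y3
  refine (Metric.infDist_le_dist_of_mem hyF).trans ?_
  rw [dist_eq_norm]
  refine y3.trans (mul_le_mul_of_nonneg_right ?_ (P.residual_nonneg x))
  have := Finset.single_le_sum (f := fun b => |A b|) (fun i _ => abs_nonneg _) (Finset.mem_univ b)
  have := le_abs_self (A b)
  linarith

theorem isClosed_Feas : IsClosed P.Feas := by
  have cg : ∀ i, Continuous (P.g i) := fun i =>
    continuous_iff_continuousAt.2 fun z => (P.grad_g i z).continuousAt
  have ch : ∀ i, Continuous (P.h i) := fun i =>
    continuous_iff_continuousAt.2 fun z => (P.grad_h i z).continuousAt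
  have cG : ∀ i, Continuous (P.G i) := fun i =>
    continuous_iff_continuousAt.2 fun z => (P.grad_G i z).continuousAt
  have cH : ∀ i, Continuous (P.H i) := fun i =>
    continuous_iff_continuousAt.2 fun z => (P.grad_H i z).continuousAt
  have : P.Feas = (⋂ i, {z | P.g i z ≤ 0}) ∩ ((⋂ j, {z | P.h j z = 0}) ∩
      ⋂ i, {z | P.G i z * P.H i z = 0}) := by
    ext z; simp [Feas]
  rw [this]
  exact (isClosed_iInter fun i => isClosed_le (cg i) continuous_const).inter
    ((isClosed_iInter fun i => isClosed_eq (ch i) continuous_const).inter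
      (isClosed_iInter fun i => isClosed_eq ((cG i).mul (cH i)) continuous_const))

end MPSC

/-- exact penalty for the MPSC under directional quasi-normality or
piecewise CRSC. -/
theorem mpsc_exact_penalty {n p q m : ℕ} (P : MPSC n p q m) (zs : Euc n)
    (hfeas : zs ∈ P.Feas) (hmin : IsLocalMinOn P.f P.Feas zs)
    (Lf : ℝ) (hLf : 0 < Lf) (U : Set (Euc n)) (hU : U ∈ 𝓝 zs)
    (hlip : ∀ x ∈ U, ∀ y ∈ U, |P.f x - P.f y| ≤ Lf * ‖x - y‖)
    (hcq : P.DirQuasiNormal zs ∨ P.PiecewiseCRSC zs) :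
    ∃ α > (0 : ℝ),
      (∃ V ∈ 𝓝 zs, ∀ z ∈ V, Metric.infDist z P.Feas ≤ α * P.residual z) ∧
      IsLocalMin (fun z => P.f z + Lf * α * P.residual z) zs := by

  obtain ⟨α, α0, hα⟩ := P.errorBound_aux hfeas hcq
  refine ⟨α, α0, ⟨_, hα, fun z hz => hz⟩, ?_⟩
  have hr0 : P.residual zs = 0 := by
    unfold MPSC.residual
    have h1 : ∀ i, min |P.G i zs| |P.H i zs| = 0 := by
      intro i
      rcases mul_eq_zero.1 (hfeas.2.2 i) with h | h <;> simp [h]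
    have h2 : ∀ i, max (P.g i zs) 0 = 0 := fun i => max_eq_right (hfeas.1 i)
    simp [h1, h2, hfeas.2.1]
  have hmin' : ∀ᶠ z in 𝓝 zs, z ∈ P.Feas → P.f zs ≤ P.f z := eventually_nhdsWithin_iff.1 hmin
  obtain ⟨δ, δ0, hδ⟩ := Metric.eventually_nhds_iff_ball.1 (hmin'.and hU)
  filter_upwards [hα, Metric.ball_mem_nhds zs (half_pos δ0)] with z hz hzb
  obtain ⟨y, hyF, hy⟩ := P.isClosed_Feas.exists_infDist_eq_dist ⟨zs, hfeas⟩ z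
  have h1 : Metric.infDist z P.Feas ≤ dist z zs := Metric.infDist_le_dist_of_mem hfeas
  rw [Metric.mem_ball] at hzb
  have hyb : y ∈ Metric.ball zs δ := by
    rw [Metric.mem_ball]
    have := dist_triangle y z zs
    rw [dist_comm y z] at this
    linarith
  have hzb' : z ∈ Metric.ball zs δ := by rw [Metric.mem_ball]; linarith
  have h2 := (hδ y hyb).1 hyF
  have h3 := (abs_le.1 (hlip z (hδ z hzb').2 y (hδ y hyb).2)).1
  rw [← dist_eq_norm, ← hy] at h3
  have h4 := mul_le_mul_of_nonneg_left hz hLf.le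
  rw [hr0, mul_zero, add_zero]
  linarith
end
end

section
/- Let z* be a local optimal solution of the MPSC at which GGCQ holds. Then z* is Q-stationary with respect to every bipartition (β₁, β₂) of I_GH*. -/
open scoped Classical InnerProductSpace
open Filter Topology

noncomputable section

open scoped Classical in
lemma farkas_aux {W ι : Type*} [AddCommGroup W] [Module ℝ W] (s : Finset ι) :
    ∀ (a : ι → W →ₗ[ℝ] ℝ) (b : W →ₗ[ℝ] ℝ),
      (∀ x, (∀ i ∈ s, a i x ≤ 0) → b x ≤ 0) →
      ∃ l : ι → ℝ, (∀ i, 0 ≤ l i) ∧ b = ∑ i ∈ s, l i • a i := by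
  induction s using Finset.induction_on with
  | empty =>
    intro a b hb
    refine ⟨fun _ => 0, fun _ => le_rfl, ?_⟩
    ext x
    have h1 := hb x (by simp)
    have h2 := hb (-x) (by simp)
    simp only [map_neg] at h2
    simp only [Finset.sum_empty, LinearMap.zero_apply]
    linarith
  | insert k s hk ih =>
    intro a b hb
    by_cases hc : ∀ x, (∀ i ∈ s, a i x ≤ 0) → b x ≤ 0
    · obtain ⟨l, hl, hbl⟩ := ih a b hc
      refine ⟨fun i => if i = k then 0 else l i, fun i => by dsimp only; split_ifs <;> simp [hl], ?_⟩
      rw [Finset.sum_insert hk, hbl]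
      simp only [if_true, zero_smul, zero_add]
      refine Finset.sum_congr rfl fun i hi => ?_
      rw [if_neg (show ¬ i = k from fun h => hk (h ▸ hi))]
    · push Not at hc
      obtain ⟨x0, hx0, hbx0⟩ := hc
      have hk0 : 0 < a k x0 := by
        by_contra hcon
        push Not at hcon
        exact absurd (hb x0 (by
          intro i hi
          rcases Finset.mem_insert.1 hi with rfl | hi
          · exact hcon
          · exact hx0 i hi)) (not_le.2 hbx0)
      set c := a k x0 with hcdef
      obtain ⟨l, hl, hbl⟩ := ih (fun i => a i - (a i x0 / c) • a k) (b - (b x0 / c) • a k) (by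
        intro x hx
        have h := hb (x - (a k x / c) • x0) (by
          intro i hi
          rcases Finset.mem_insert.1 hi with rfl | hi
          · simp only [map_sub, map_smul, smul_eq_mul, ← hcdef]
            field_simp
            simp
          · have := hx i hi
            simp only [LinearMap.sub_apply, LinearMap.smul_apply, smul_eq_mul] at this
            simp only [map_sub, map_smul, smul_eq_mul]
            calc _ = _ := by ring
              _ ≤ 0 := this)
        simp only [map_sub, map_smul, smul_eq_mul] at h
        simp only [LinearMap.sub_apply, LinearMap.smul_apply, smul_eq_mul]
        calc _ = _ := by ring
          _ ≤ 0 := h)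
      refine ⟨fun i => if i = k then b x0 / c + ∑ j ∈ s, l j * (-(a j x0) / c) else l i, ?_, ?_⟩
      · intro i
        dsimp only
        split_ifs
        · refine add_nonneg (by positivity) (Finset.sum_nonneg fun j hj => ?_)
          exact mul_nonneg (hl j) (div_nonneg (by linarith [hx0 j hj]) hk0.le)
        · exact hl i
      · rw [Finset.sum_insert hk]
        dsimp only
        rw [if_pos rfl]
        have e : ∑ i ∈ s, (if i = k then b x0 / c + ∑ j ∈ s, l j * (-(a j x0) / c) else l i) • a i
            = ∑ i ∈ s, l i • a i := by
          refine Finset.sum_congr rfl fun i hi => ?_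
          rw [if_neg (show ¬ i = k from fun h => hk (h ▸ hi))]
        rw [e]
        have e2 : b = (b x0 / c) • a k + ∑ i ∈ s, l i • (a i - (a i x0 / c) • a k) := by
          rw [← hbl]; abel
        conv_lhs => rw [e2]
        ext x
        simp only [LinearMap.add_apply, LinearMap.smul_apply, LinearMap.sum_apply,
          LinearMap.sub_apply, smul_eq_mul, mul_sub, Finset.sum_sub_distrib, add_mul,
          Finset.sum_mul]
        have : ∑ i ∈ s, l i * (-(a i x0) / c) * a k x = -∑ i ∈ s, l i * (a i x0 / c * a k x) := by
          rw [← Finset.sum_neg_distrib]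
          exact Finset.sum_congr rfl fun i _ => by ring
        rw [this]; ring

lemma farkas_eq {n : ℕ} {ι κ : Type*} [Fintype ι] [Fintype κ] (a : ι → Euc n) (c : κ → Euc n)
    (b : Euc n)
    (hb : ∀ x, (∀ i, ⟪a i, x⟫_ℝ ≤ 0) → (∀ k, ⟪c k, x⟫_ℝ = 0) → ⟪b, x⟫_ℝ ≤ 0) :
    ∃ (l : ι → ℝ) (t : κ → ℝ), (∀ i, 0 ≤ l i) ∧ b = ∑ i, l i • a i + ∑ k, t k • c k := by
  obtain ⟨l, hl, hbl⟩ := farkas_aux (Finset.univ : Finset (ι ⊕ (κ ⊕ κ)))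
    (Sum.elim (fun i => innerₗ (Euc n) (a i))
      (Sum.elim (fun k => innerₗ (Euc n) (c k)) (fun k => innerₗ (Euc n) (-c k))))
    (innerₗ (Euc n) b) (by
      intro x hx
      refine hb x (fun i => hx (.inl i) (Finset.mem_univ _)) (fun k => ?_)
      have h1 := hx (.inr (.inl k)) (Finset.mem_univ _)
      have h2 := hx (.inr (.inr k)) (Finset.mem_univ _)
      simp only [Sum.elim_inr, Sum.elim_inl, innerₗ_apply_apply, inner_neg_left] at h1 h2
      linarith)
  refine ⟨fun i => l (.inl i), fun k => l (.inr (.inl k)) - l (.inr (.inr k)), fun i => hl _, ?_⟩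
  refine ext_inner_right ℝ fun x => ?_
  have := congrArg (fun φ => φ x) hbl
  simp only [Fintype.sum_sum_type, Sum.elim_inl, Sum.elim_inr, LinearMap.add_apply,
    LinearMap.sum_apply, LinearMap.smul_apply, innerₗ_apply_apply, smul_eq_mul,
    inner_neg_left] at this
  rw [this]
  simp only [inner_add_left, sum_inner, real_inner_smul_left, sub_mul, Finset.sum_sub_distrib,
    mul_neg, Finset.sum_neg_distrib]
  ring

lemma neg_grad_mem {n p q m : ℕ} (P : MPSC n p q m) (zs : Euc n)
    (hmin : IsLocalMinOn P.f P.Feas zs) :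
    -P.f' zs ∈ MPSC.frechetNormalCone P.Feas zs := by
  intro ε hε
  have h1 := (hasGradientAt_iff_isLittleO.1 (P.grad_f zs)).def hε
  have h2 : ∀ᶠ y in 𝓝 zs, y ∈ P.Feas → P.f zs ≤ P.f y := eventually_nhdsWithin_iff.1 hmin
  obtain ⟨δ, hδ, h⟩ := Metric.eventually_nhds_iff.1 (h1.and h2)
  refine ⟨δ, hδ, fun y hy hyd => ?_⟩
  obtain ⟨h3, h4⟩ := h (by rwa [dist_eq_norm])
  have h5 := h4 hy
  rw [Real.norm_eq_abs] at h3
  have h6 := (abs_le.1 h3).2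
  rw [inner_neg_left]
  linarith

lemma branch_mult {n p q m : ℕ} (P : MPSC n p q m) (zs : Euc n) (b1 b2 : Set (Fin m))
    (hb : b1 ∪ b2 = P.IGH zs) (hd : b1 ∩ b2 = ∅)
    (hL : ∀ d ∈ P.LinCone zs, ⟪-P.f' zs, d⟫_ℝ ≤ 0) :
    ∃ (lg : Fin p → ℝ) (lh : Fin q → ℝ) (lG lH : Fin m → ℝ),
      P.InRSC zs lg lh lG lH ∧
      -P.f' zs = (∑ i, lg i • P.g' i zs) + (∑ j, lh j • P.h' j zs)
        + (∑ i, (lG i • P.G' i zs + lH i • P.H' i zs)) ∧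
      (∀ i, 0 ≤ lg i) ∧ (∀ i ∈ b1, lH i = 0) ∧ (∀ i ∈ b2, lG i = 0) := by
  obtain ⟨l, t, hl, hE⟩ := farkas_eq
    (fun i => if i ∈ P.Ig zs then P.g' i zs else 0)
    (Sum.elim (fun j => P.h' j zs)
      (Sum.elim (fun i => if i ∈ P.IGs zs ∪ b1 then P.G' i zs else 0)
        (fun i => if i ∈ P.IHs zs ∪ b2 then P.H' i zs else 0))) (-P.f' zs) (by
      intro d hg hc
      have hG : ∀ i ∈ P.IGs zs ∪ b1, ⟪P.G' i zs, d⟫_ℝ = 0 := fun i hi => by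
        simpa only [Sum.elim_inr, Sum.elim_inl, if_pos hi] using hc (.inr (.inl i))
      have hH : ∀ i ∈ P.IHs zs ∪ b2, ⟪P.H' i zs, d⟫_ℝ = 0 := fun i hi => by
        simpa only [Sum.elim_inr, Sum.elim_inl, if_pos hi] using hc (.inr (.inr i))
      refine hL d ⟨fun i hi => ?_, fun j => hc (.inl j), fun i hi => hG i (.inl hi),
        fun i hi => hH i (.inl hi), fun i hi => ?_⟩
      · simpa only [if_pos hi] using hg i
      · rw [← hb] at hi
        rcases hi with hi | hi
        · rw [hG i (.inr hi), zero_mul]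
        · rw [hH i (.inr hi), mul_zero])
  have hnb : ∀ i, i ∈ b1 ∪ b2 → P.G i zs = 0 ∧ P.H i zs = 0 := fun i hi => by
    rw [hb] at hi; exact hi
  have hdis : ∀ i, i ∈ b1 → i ∉ b2 := fun i h1 h2 => by
    have : i ∈ b1 ∩ b2 := ⟨h1, h2⟩
    rw [hd] at this; exact this
  refine ⟨fun i => if i ∈ P.Ig zs then l i else 0, fun j => t (.inl j),
    fun i => if i ∈ P.IGs zs ∪ b1 then t (.inr (.inl i)) else 0,
    fun i => if i ∈ P.IHs zs ∪ b2 then t (.inr (.inr i)) else 0,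
    ⟨fun i hi => if_neg hi, fun i hi => if_neg ?_, fun i hi => if_neg ?_⟩, ?_, ?_, 
    fun i hi => if_neg ?_, fun i hi => if_neg ?_⟩
  · rintro (h | h)
    · exact hi.1 h.1
    · exact hi.1 (hnb i (.inl h)).1
  · rintro (h | h)
    · exact hi.2 h.2
    · exact hi.2 (hnb i (.inr h)).2
  · rw [hE]
    simp only [Fintype.sum_sum_type, Sum.elim_inl, Sum.elim_inr, smul_ite, ite_smul, smul_zero,
      zero_smul, Finset.sum_add_distrib]
    abel
  · intro i
    dsimp only
    split_ifs
    · exact hl i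
    · exact le_rfl
  · rintro (h | h)
    · exact h.1 (hnb i (.inl hi)).1
    · exact hdis i hi h
  · rintro (h | h)
    · exact h.2 (hnb i (.inr hi)).2
    · exact hdis i h hi

/-- a local minimizer of the MPSC satisfying GGCQ is Q-stationary with
respect to every bipartition of `I_GH*`. -/
theorem mpsc_GGCQ_Q_stationary {n p q m : ℕ} (P : MPSC n p q m) (zs : Euc n)
    (hfeas : zs ∈ P.Feas) (hmin : IsLocalMinOn P.f P.Feas zs) (hggcq : P.GGCQ zs) :
    ∀ b1 b2 : Set (Fin m), b1 ∪ b2 = P.IGH zs → b1 ∩ b2 = ∅ → P.QStat zs b1 b2 := by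
  intro b1 b2 hb hd
  have hL : ∀ d ∈ P.LinCone zs, ⟪-P.f' zs, d⟫_ℝ ≤ 0 := by
    have h := neg_grad_mem P zs hmin
    rw [show MPSC.frechetNormalCone P.Feas zs = _ from hggcq] at h
    exact h
  obtain ⟨lg, lh, lG, lH, hR, hE, hpos, h1, h2⟩ := branch_mult P zs b1 b2 hb hd hL
  obtain ⟨kg, kh, kG, kH, hR', hE', hpos', h1', h2'⟩ := branch_mult P zs b2 b1
    (by rw [Set.union_comm, hb]) (by rw [Set.inter_comm, hd]) hL
  refine ⟨lg, lg - kg, lh, lh - kh, lG, lH, lG - kG, lH - kH, hR, ?_, ⟨⟨?_, ?_, ?_⟩, ?_⟩, ?_, ?_, ?_⟩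
  · rw [add_assoc, add_assoc, ← add_assoc (∑ i, lg i • P.g' i zs), ← hE, add_neg_cancel]
  · intro i hi
    simp [hR.1 i hi, hR'.1 i hi]
  · intro i hi
    simp [hR.2.1 i hi, hR'.2.1 i hi]
  · intro i hi
    simp [hR.2.2 i hi, hR'.2.2 i hi]
  · have h0 := sub_eq_zero.2 (hE.symm.trans hE')
    rw [← h0]
    simp only [Pi.sub_apply, sub_smul, Finset.sum_sub_distrib, Finset.sum_add_distrib]
    abel
  · intro i _
    have := hpos i
    have := hpos' i
    simp only [Pi.sub_apply]
    exact max_le (by linarith) (by linarith)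
  · intro i hi
    exact ⟨h1 i hi, by simp [h2' i hi]⟩
  · intro i hi
    exact ⟨h2 i hi, by simp [h1' i hi]⟩
end
end

section
/- Let z* ∈ F be Q-stationary with respect to some bipartition (β₁, β₂) of I_GH* such that every (μ^g, μ^h, μ^G, μ^H) ∈ N_SC satisfies μ_i^G μ_{i'}^G = 0 and μ_i^H μ_{i'}^H = 0 for all (i, i') ∈ β₁ × β₂, μ_i^G μ_{i'}^H = 0 for all (i, i') ∈ β₁ × β₁, and μ_i^G μ_{i'}^H = 0 for all (i, i') ∈ β₂ × β₂. Then z* is S-stationary: there exist multipliers (λ^g, λ^h, λ^G, λ^H) with 0 = ∇f(z*) + Σ_{i∈I_g*} λ_i^g ∇g_i(z*) + Σ_{j=1}^q λ_j^h ∇h_j(z*) + Σ_{i=1}^m (λ_i^G ∇G_i(z*) + λ_i^H ∇H_i(z*)), λ_i^g ≥ 0 for i ∈ I_g*, λ_i^G = 0 for i ∈ I_H*, λ_i^H = 0 for i ∈ I_G*, and λ_i^G = λ_i^H = 0 for all i ∈ I_GH*. -/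
open scoped Classical InnerProductSpace
open Filter Topology

noncomputable section

/-- Q-stationarity w.r.t. a bipartition satisfying conditions (21)-(23)
implies S-stationarity. -/
theorem mpsc_Q_stationary_to_S_stationary {n p q m : ℕ} (P : MPSC n p q m) (zs : Euc n)
    (hfeas : zs ∈ P.Feas) (b1 b2 : Set (Fin m))
    (hb : b1 ∪ b2 = P.IGH zs) (hb' : b1 ∩ b2 = ∅)
    (hq : P.QStat zs b1 b2)
    (hN : ∀ (mg : Fin p → ℝ) (mh : Fin q → ℝ) (mG mH : Fin m → ℝ),
      P.InNSC zs mg mh mG mH →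
      (∀ i ∈ b1, ∀ i' ∈ b2, mG i * mG i' = 0 ∧ mH i * mH i' = 0) ∧
      (∀ i ∈ b1, ∀ i' ∈ b1, mG i * mH i' = 0) ∧
      (∀ i ∈ b2, ∀ i' ∈ b2, mG i * mH i' = 0)) :
    ∃ (lg : Fin p → ℝ) (lh : Fin q → ℝ) (lG lH : Fin m → ℝ),
      P.IsSMult zs lg lh lG lH := by
  obtain ⟨lg, mg, lh, mh, lG, lH, mG, mH, ⟨hl1, hl2, hl3⟩, hl, hM, hg, h1, h2⟩ := hq
  obtain ⟨hA, hB, hC⟩ := hN mg mh mG mH hM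
  obtain ⟨⟨hm1, hm2, hm3⟩, hm⟩ := hM
  have hfilter : ∀ k : Fin p → ℝ, (∀ i, i ∉ P.Ig zs → k i = 0) →
      (∑ i ∈ Finset.univ.filter (fun i => i ∈ P.Ig zs), k i • P.g' i zs)
        = ∑ i, k i • P.g' i zs := by
    intro k hk
    apply Finset.sum_subset (Finset.subset_univ _)
    intro i _ hi
    rw [hk i (by simpa using hi), zero_smul]
  by_cases hcase : (∀ i ∈ b1, mG i = 0) ∧ (∀ i ∈ b2, mH i = 0)
  · refine ⟨lg, lh, lG, lH, ?_, fun i hi => (le_max_right _ _).trans (hg i hi), hl2, hl3, ?_⟩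
    · rw [hfilter lg hl1]; exact hl
    · intro i hi
      rw [← hb] at hi
      rcases hi with hi | hi
      · exact ⟨by rw [(h1 i hi).2, hcase.1 i hi], (h1 i hi).1⟩
      · exact ⟨(h2 i hi).1, by rw [(h2 i hi).2, hcase.2 i hi]⟩
  · have hz : (∀ i ∈ b1, mH i = 0) ∧ (∀ i ∈ b2, mG i = 0) := by
      have hex : (∃ i ∈ b1, mG i ≠ 0) ∨ (∃ i ∈ b2, mH i ≠ 0) := by
        by_contra hcon
        push Not at hcon
        exact hcase hcon
      rcases hex with ⟨i, hi, hne⟩ | ⟨i, hi, hne⟩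
      · exact ⟨fun j hj => (mul_eq_zero.1 (hB i hi j hj)).resolve_left hne,
          fun j hj => (mul_eq_zero.1 (hA i hi j hj).1).resolve_left hne⟩
      · exact ⟨fun j hj => (mul_eq_zero.1 (hA j hj i hi).2).resolve_right hne,
          fun j hj => (mul_eq_zero.1 (hC j hj i hi)).resolve_right hne⟩
    refine ⟨lg - mg, lh - mh, lG - mG, lH - mH, ?_, ?_, ?_, ?_, ?_⟩
    · rw [hfilter (lg - mg) (fun i hi => by simp [hl1 i hi, hm1 i hi])]
      simp only [Pi.sub_apply, sub_smul, Finset.sum_sub_distrib, Finset.sum_add_distrib] at hl hm ⊢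
      have := congrArg₂ (· - ·) hl hm
      simp only [sub_zero] at this
      rw [this]
      abel
    · intro i hi
      simpa using (le_max_left _ _).trans (hg i hi)
    · intro i hi
      simp [hl2 i hi, hm2 i hi]
    · intro i hi
      simp [hl3 i hi, hm3 i hi]
    · intro i hi
      rw [← hb] at hi
      rcases hi with hi | hi
      · simp [h1 i hi, hz.1 i hi]
      · simp [h2 i hi, hz.2 i hi]
end
end

section
/- Let z* be a local minimizer of the MPSC at which MPSC-LICQ holds, i.e., the gradients {∇g_i(z*) : i ∈ I_g*} ∪ {∇h_j(z*) : j = 1,…,q} ∪ {∇G_i(z*) : i ∈ I_G* ∪ I_GH*} ∪ {∇H_i(z*) : i ∈ I_H* ∪ I_GH*} are linearly independent. Then z* is S-stationary: there exist multipliers (λ^g, λ^h, λ^G, λ^H) with 0 = ∇f(z*) + Σ_{i∈I_g*} λ_i^g ∇g_i(z*) + Σ_{j=1}^q λ_j^h ∇h_j(z*) + Σ_{i=1}^m (λ_i^G ∇G_i(z*) + λ_i^H ∇H_i(z*)), λ_i^g ≥ 0 for i ∈ I_g*, λ_i^G = 0 for i ∈ I_H*, λ_i^H = 0 for i ∈ I_G*,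 and λ_i^G = λ_i^H = 0 for all i ∈ I_GH*. -/
open scoped Classical InnerProductSpace
open Filter Topology

noncomputable section

section Helpers

variable {E : Type*} [NormedAddCommGroup E] [InnerProductSpace ℝ E] [FiniteDimensional ℝ E]

theorem aux_strict [CompleteSpace E] {f : E → ℝ} {f' : E → E} (h : ∀ z, HasGradientAt f (f' z) z)
    (hc : Continuous f') (x : E) :
    HasStrictFDerivAt f (innerSL ℝ (f' x)) x := by
  refine hasStrictFDerivAt_of_hasFDerivAt_of_continuousAt (f' := fun y => innerSL ℝ (f' y)) ?_ ?_
  · exact Eventually.of_forall fun y => (h y).hasFDerivAt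
  · exact ((innerSL ℝ).continuous.comp hc).continuousAt

theorem aux_dual_s19 {ι : Type*} [Fintype ι] {v : ι → E} (hv : LinearIndependent ℝ v) :
    ∃ R : (ι → ℝ) →L[ℝ] E, ∀ w i, ⟪v i, R w⟫_ℝ = w i := by
  classical
  rw [linearIndependent_iff_injective_fintypeLinearCombination] at hv
  obtain ⟨g, hg⟩ := LinearMap.exists_leftInverse_of_injective _ (LinearMap.ker_eq_bot.2 hv)
  have hgv : ∀ i, g (v i) = Pi.single i 1 := by
    intro i
    have := LinearMap.congr_fun hg (Pi.single i 1)
    simpa using this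
  let u : ι → E := fun j =>
    (InnerProductSpace.toDual ℝ E).symm (LinearMap.toContinuousLinearMap (LinearMap.proj j ∘ₗ g))
  have hu : ∀ i j, ⟪v i, u j⟫_ℝ = (Pi.single i 1 : ι → ℝ) j := by
    intro i j
    rw [real_inner_comm, InnerProductSpace.toDual_symm_apply]
    simp [hgv]
  refine ⟨LinearMap.toContinuousLinearMap (Fintype.linearCombination ℝ u), fun w i => ?_⟩
  simp [Fintype.linearCombination_apply, inner_sum, inner_smul_right, hu, Pi.single_apply]

theorem aux_main {ι : Type*} [Fintype ι] {f : E → ℝ} {f' : E} {S : Set E} {zs : E}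
    {c : ι → E → ℝ} {v : ι → E}
    (hf : HasStrictFDerivAt f (innerSL ℝ f') zs)
    (hc : ∀ i, HasStrictFDerivAt (c i) (innerSL ℝ (v i)) zs)
    (hc0 : ∀ i, c i zs = 0) (hv : LinearIndependent ℝ v)
    (hmin : IsLocalMinOn f S zs)
    (h0 : ∀ᶠ z in 𝓝 zs, (∀ i, c i z = 0) → z ∈ S) :
    ∃ μ : ι → ℝ, f' + ∑ i, μ i • v i = 0 ∧ ∀ w : ι → ℝ,
      (∀ᶠ z in 𝓝 zs, ∀ t : ℝ, 0 ≤ t → (∀ i, c i z = t * w i) → z ∈ S) →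
      ∑ i, μ i * w i ≤ 0 := by
  have hmin' : IsLocalMinOn f {x | ∀ i, c i x = c i zs} zs := by
    have h1 := eventually_nhdsWithin_iff.1 hmin
    refine eventually_nhdsWithin_iff.2 ?_
    filter_upwards [h1, h0] with z hz1 hz2 hz3
    exact hz1 (hz2 fun i => by rw [hz3 i, hc0])
  obtain ⟨Λ, Λ₀, hne, hsum⟩ :=
    (IsLocalExtrOn.exists_multipliers_of_hasStrictFDerivAt (Or.inl hmin') hc hf)
  have hsum' : ∑ i, Λ i • v i + Λ₀ • f' = 0 := by
    refine ext_inner_right ℝ fun x => ?_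
    have := DFunLike.congr_fun hsum x
    simpa [inner_add_left, sum_inner, real_inner_smul_left] using this
  have hΛ₀ : Λ₀ ≠ 0 := by
    rintro rfl
    apply hne
    have := Fintype.linearIndependent_iff.1 hv Λ (by simpa using hsum')
    ext i <;> simp [this]
  have hstat : f' + ∑ i, (Λ i / Λ₀) • v i = 0 := by
    have : Λ₀⁻¹ • (∑ i, Λ i • v i + Λ₀ • f') = 0 := by rw [hsum', smul_zero]
    rw [smul_add, Finset.smul_sum, smul_smul, inv_mul_cancel₀ hΛ₀, one_smul] at this
    rw [add_comm, ← this]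
    congr 1
    exact Finset.sum_congr rfl fun i _ => by rw [smul_smul, div_eq_inv_mul]
  refine ⟨fun i => Λ i / Λ₀, hstat, fun w hw => ?_⟩
  obtain ⟨R, hR⟩ := aux_dual_s19 hv
  let Φ : (ι → ℝ) → (ι → ℝ) := fun y i => c i (zs + R y)
  have hz0 : zs + R 0 = zs := by simp
  have hΦ0 : Φ 0 = 0 := by ext i; simp [Φ, hc0]
  have hin : HasStrictFDerivAt (fun y => zs + R y) R 0 := R.hasStrictFDerivAt.const_add zs
  have hΦ : HasStrictFDerivAt Φ ((ContinuousLinearEquiv.refl ℝ (ι → ℝ) : (ι → ℝ) ≃L[ℝ] (ι → ℝ)) :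
      (ι → ℝ) →L[ℝ] (ι → ℝ)) 0 := by
    rw [hasStrictFDerivAt_pi']
    intro i
    have h1 : HasStrictFDerivAt (c i) (innerSL ℝ (v i)) (zs + R 0) := by rw [hz0]; exact hc i
    have h2 := h1.comp (0 : ι → ℝ) hin
    refine h2.congr_fderiv ?_
    ext w
    simp [hR]
  let σ := hΦ.localInverse Φ _ _
  have hσ := hΦ.to_localInverse
  have hr := hΦ.eventually_right_inverse
  have hσ0 : σ 0 = 0 := by
    have := hΦ.localInverse_apply_image
    rw [hΦ0] at this; exact this
  rw [hΦ0] at hσ hr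
  let z : ℝ → E := fun t => zs + R (σ (t • w))
  have hline : HasDerivAt (fun t : ℝ => t • w) w 0 := by
    simpa using (hasDerivAt_id (0 : ℝ)).smul_const w
  have hzd : HasDerivAt z (R w) 0 := by
    have h1 : HasFDerivAt σ (((ContinuousLinearEquiv.refl ℝ (ι → ℝ)).symm :
        (ι → ℝ) ≃L[ℝ] (ι → ℝ)) : (ι → ℝ) →L[ℝ] (ι → ℝ)) ((0 : ℝ) • w) := by rw [zero_smul]; exact hσ.hasFDerivAt
    have h2 := h1.comp_hasDerivAt (0 : ℝ) hline
    have h3 := R.hasFDerivAt.comp_hasDerivAt (0 : ℝ) h2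
    exact h3.const_add zs
  have hzz : z 0 = zs := by simp [z, hσ0]
  have hzt : Tendsto z (𝓝 0) (𝓝 zs) := by
    have := hzd.continuousAt.tendsto
    rwa [hzz] at this
  have hlt : Tendsto (fun t : ℝ => t • w) (𝓝 0) (𝓝 0) := by
    have := hline.continuousAt.tendsto
    simpa using this
  have hfz : HasDerivAt (fun t => f (z t)) ⟪f', R w⟫_ℝ 0 := by
    have h1 : HasFDerivAt f (innerSL ℝ f') (z 0) := by rw [hzz]; exact hf.hasFDerivAt
    exact h1.comp_hasDerivAt (0 : ℝ) hzd
  have hnn : 0 ≤ ⟪f', R w⟫_ℝ := by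
    refine ge_of_tendsto hfz.tendsto_slope_zero_right ?_
    have e1 := hzt.eventually hw
    have e2 := hlt.eventually hr
    have e3 := hzt.eventually (eventually_nhdsWithin_iff.1 hmin)
    filter_upwards [nhdsWithin_le_nhds e1, nhdsWithin_le_nhds e2, nhdsWithin_le_nhds e3,
      self_mem_nhdsWithin] with t h1 h2 h3 ht
    have ht' : 0 < t := ht
    have hS : z t ∈ S := h1 t ht'.le fun i => by
      have := congrFun h2 i
      simpa [Φ, z, σ] using this
    have := h3 hS
    simp only [zero_add, hzz, smul_eq_mul]
    exact mul_nonneg (inv_nonneg.2 ht'.le) (sub_nonneg.2 this)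
  have hf'' : f' = - ∑ i, (Λ i / Λ₀) • v i := eq_neg_of_add_eq_zero_left hstat
  rw [hf'', inner_neg_left, sum_inner] at hnn
  simp only [real_inner_smul_left, hR] at hnn
  linarith

end Helpers

/-- a local minimizer of the MPSC satisfying MPSC-LICQ is S-stationary. -/
theorem mpsc_LICQ_S_stationary {n p q m : ℕ} (P : MPSC n p q m) (zs : Euc n)
    (hfeas : zs ∈ P.Feas) (hmin : IsLocalMinOn P.f P.Feas zs) (hlicq : P.LICQ zs) :
    ∃ (lg : Fin p → ℝ) (lh : Fin q → ℝ) (lG lH : Fin m → ℝ),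
      P.IsSMult zs lg lh lG lH := by
  classical
  obtain ⟨hg, hh, hGH⟩ := hfeas
  let c : {i // i ∈ P.Ig zs} ⊕ (Fin q ⊕ ({i // i ∈ P.IGs zs ∪ P.IGH zs} ⊕
      {i // i ∈ P.IHs zs ∪ P.IGH zs})) → Euc n → ℝ :=
    Sum.elim (fun i => P.g i.1) (Sum.elim (fun j => P.h j)
      (Sum.elim (fun i => P.G i.1) (fun i => P.H i.1)))
  have hin : ∀ᶠ z in 𝓝 zs, ∀ i, i ∉ P.Ig zs → P.g i z ≤ 0 := by
    rw [eventually_all]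
    intro i
    by_cases hi : i ∈ P.Ig zs
    · exact Eventually.of_forall fun z h => absurd hi h
    · have hlt : P.g i zs < 0 := lt_of_le_of_ne (hg i) hi
      have hct : ContinuousAt (P.g i) zs := (P.grad_g i zs).hasFDerivAt.continuousAt
      filter_upwards [hct.eventually (gt_mem_nhds hlt)] with z hz _
      exact le_of_lt hz
  -- feasibility criterion
  have key : ∀ z, (∀ i, i ∉ P.Ig zs → P.g i z ≤ 0) →
      (∀ i (hi : i ∈ P.Ig zs), c (Sum.inl ⟨i, hi⟩) z ≤ 0) →
      (∀ j, c (Sum.inr (Sum.inl j)) z = 0) →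
      (∀ i, i ∈ P.IGs zs → P.G i z = 0) → (∀ i, i ∈ P.IHs zs → P.H i z = 0) →
      (∀ i, i ∈ P.IGH zs → P.G i z = 0 ∨ P.H i z = 0) → z ∈ P.Feas := by
    intro z h1 h2 h3 h4 h5 h6
    refine ⟨fun i => ?_, h3, fun i => ?_⟩
    · by_cases hi : i ∈ P.Ig zs
      · exact h2 i hi
      · exact h1 i hi
    · rcases mul_eq_zero.1 (hGH i) with h | h
      · by_cases h' : P.H i zs = 0
        · exact mul_eq_zero.2 (h6 i ⟨h, h'⟩)
        · exact mul_eq_zero.2 (Or.inl (h4 i ⟨h, h'⟩))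
      · by_cases h' : P.G i zs = 0
        · exact mul_eq_zero.2 (h6 i ⟨h', h⟩)
        · exact mul_eq_zero.2 (Or.inr (h5 i ⟨h', h⟩))
  have hc0 : ∀ i, c i zs = 0 := by
    rintro (i | j | i | i)
    · exact i.2
    · exact hh j
    · rcases i.2 with h | h
      · exact h.1
      · exact h.1
    · rcases i.2 with h | h
      · exact h.2
      · exact h.2
  obtain ⟨μ, hstat, hsgn⟩ := aux_main (S := P.Feas) (c := c) (aux_strict P.grad_f P.cont_f' zs)
    (by
      rintro (i | j | i | i)
      · exact aux_strict (P.grad_g i.1) (P.cont_g' i.1) zs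
      · exact aux_strict (P.grad_h j) (P.cont_h' j) zs
      · exact aux_strict (P.grad_G i.1) (P.cont_G' i.1) zs
      · exact aux_strict (P.grad_H i.1) (P.cont_H' i.1) zs) hc0 hlicq hmin
    (by
      filter_upwards [hin] with z hz hz0
      exact key z hz (fun i hi => (hz0 _).le) (fun j => hz0 _)
        (fun i hi => hz0 (Sum.inr (Sum.inr (Sum.inl ⟨i, Or.inl hi⟩))))
        (fun i hi => hz0 (Sum.inr (Sum.inr (Sum.inr ⟨i, Or.inl hi⟩))))
        (fun i hi => Or.inl (hz0 (Sum.inr (Sum.inr (Sum.inl ⟨i, Or.inr hi⟩))))))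
  have hgs : ∀ k : {i // i ∈ P.Ig zs}, 0 ≤ μ (Sum.inl k) := by
    intro k
    have := hsgn (Pi.single (Sum.inl k) (-1)) (by
      filter_upwards [hin] with z hz t ht hzt
      refine key z hz (fun i hi => ?_) (fun j => ?_) (fun i hi => ?_) (fun i hi => ?_)
        (fun i hi => Or.inl ?_)
      · rw [hzt, Pi.single_apply]
        split_ifs <;> simp [ht]
      · rw [hzt]; simp
      · have := hzt (Sum.inr (Sum.inr (Sum.inl ⟨i, Or.inl hi⟩)))
        simpa [c] using this
      · have := hzt (Sum.inr (Sum.inr (Sum.inr ⟨i, Or.inl hi⟩)))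
        simpa [c] using this
      · have := hzt (Sum.inr (Sum.inr (Sum.inl ⟨i, Or.inr hi⟩)))
        simpa [c] using this)
    simpa [Pi.single_apply] using this
  have hGs : ∀ (k : Fin m) (hk : k ∈ P.IGH zs) (s : ℝ),
      μ (Sum.inr (Sum.inr (Sum.inl ⟨k, Or.inr hk⟩))) * s ≤ 0 := by
    intro k hk s
    have := hsgn (Pi.single (Sum.inr (Sum.inr (Sum.inl ⟨k, Or.inr hk⟩))) s) (by
      filter_upwards [hin] with z hz t ht hzt
      refine key z hz (fun i hi => ?_) (fun j => ?_) (fun i hi => ?_) (fun i hi => ?_)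
        (fun i hi => Or.inr ?_)
      · rw [hzt]; simp
      · rw [hzt]; simp
      · have := hzt (Sum.inr (Sum.inr (Sum.inl ⟨i, Or.inl hi⟩)))
        have hne : i ≠ k := by rintro rfl; exact hi.2 hk.2
        rw [Pi.single_eq_of_ne (by
          intro h
          simp only [Sum.inr.injEq, Sum.inl.injEq] at h
          exact hne (congrArg Subtype.val h)), mul_zero] at this
        exact this
      · have := hzt (Sum.inr (Sum.inr (Sum.inr ⟨i, Or.inl hi⟩)))
        simpa [c] using this
      · have := hzt (Sum.inr (Sum.inr (Sum.inr ⟨i, Or.inr hi⟩)))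
        simpa [c] using this)
    simpa [Pi.single_apply] using this
  have hHs : ∀ (k : Fin m) (hk : k ∈ P.IGH zs) (s : ℝ),
      μ (Sum.inr (Sum.inr (Sum.inr ⟨k, Or.inr hk⟩))) * s ≤ 0 := by
    intro k hk s
    have := hsgn (Pi.single (Sum.inr (Sum.inr (Sum.inr ⟨k, Or.inr hk⟩))) s) (by
      filter_upwards [hin] with z hz t ht hzt
      refine key z hz (fun i hi => ?_) (fun j => ?_) (fun i hi => ?_) (fun i hi => ?_)
        (fun i hi => Or.inl ?_)
      · rw [hzt]; simp
      · rw [hzt]; simp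
      · have := hzt (Sum.inr (Sum.inr (Sum.inl ⟨i, Or.inl hi⟩)))
        simpa [c] using this
      · have := hzt (Sum.inr (Sum.inr (Sum.inr ⟨i, Or.inl hi⟩)))
        have hne : i ≠ k := by rintro rfl; exact hi.1 hk.1
        rw [Pi.single_eq_of_ne (by
          intro h
          simp only [Sum.inr.injEq, Sum.inl.injEq] at h
          exact hne (congrArg Subtype.val h)), mul_zero] at this
        exact this
      · have := hzt (Sum.inr (Sum.inr (Sum.inl ⟨i, Or.inr hi⟩)))
        simpa [c] using this)
    simpa [Pi.single_apply] using this
  have zero_of : ∀ a : ℝ, (∀ s : ℝ, a * s ≤ 0) → a = 0 := fun a ha => by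
    have h1 := ha 1
    have h2 := ha (-1)
    linarith
  refine ⟨fun i => if hi : i ∈ P.Ig zs then μ (Sum.inl ⟨i, hi⟩) else 0,
    fun j => μ (Sum.inr (Sum.inl j)),
    fun i => if hi : i ∈ P.IGs zs ∪ P.IGH zs then μ (Sum.inr (Sum.inr (Sum.inl ⟨i, hi⟩))) else 0,
    fun i => if hi : i ∈ P.IHs zs ∪ P.IGH zs then μ (Sum.inr (Sum.inr (Sum.inr ⟨i, hi⟩))) else 0,
    ?_, ?_, ?_, ?_, ?_⟩
  · have aux : ∀ {k : ℕ} (A : Set (Fin k)) [Fintype {i // i ∈ A}] (a : {i // i ∈ A} → ℝ) (u : Fin k → Euc n),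
        ∑ i : {i // i ∈ A}, a i • u i.1 =
          ∑ i ∈ Finset.univ.filter (fun i => i ∈ A), (if hi : i ∈ A then a ⟨i, hi⟩ else 0) • u i := by
      intro k A _ a u
      rw [← Finset.sum_subtype_of_mem (p := fun i => i ∈ A)
        (f := fun i => (if hi : i ∈ A then a ⟨i, hi⟩ else 0) • u i) (by simp)]
      refine Finset.sum_congr (by ext; simp) fun i _ => ?_
      simp [i.2]
    have aux2 : ∀ {k : ℕ} (A : Set (Fin k)) [Fintype {i // i ∈ A}] (a : {i // i ∈ A} → ℝ) (u : Fin k → Euc n),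
        ∑ i : {i // i ∈ A}, a i • u i.1 =
          ∑ i, (if hi : i ∈ A then a ⟨i, hi⟩ else 0) • u i := by
      intro k A _ a u
      rw [aux, Finset.sum_filter]
      refine Finset.sum_congr rfl fun i _ => ?_
      split_ifs <;> simp
    rw [← hstat]
    simp only [Fintype.sum_sum_type, Sum.elim_inl, Sum.elim_inr]
    rw [aux (P.Ig zs) (fun i => μ (Sum.inl i)) (fun i => P.g' i zs),
      aux2 (P.IGs zs ∪ P.IGH zs) (fun i => μ (Sum.inr (Sum.inr (Sum.inl i)))) (fun i => P.G' i zs),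
      aux2 (P.IHs zs ∪ P.IGH zs) (fun i => μ (Sum.inr (Sum.inr (Sum.inr i)))) (fun i => P.H' i zs),
      Finset.sum_add_distrib]
    simp only [add_assoc]
    congr!
  · intro i hi
    simp only [hi, dif_pos]
    exact hgs _
  · intro i hi
    refine dif_neg ?_
    rintro (h | h)
    · exact hi.1 h.1
    · exact hi.1 h.1
  · intro i hi
    refine dif_neg ?_
    rintro (h | h)
    · exact hi.2 h.2
    · exact hi.2 h.2
  · intro i hi
    constructor
    · exact (dif_pos (Or.inr hi)).trans (zero_of _ (hGs i hi))
    · exact (dif_pos (Or.inr hi)).trans (zero_of _ (hHs i hi))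
end
end
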